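/- arXiv:2508.12965 — 8 statements merged into one kernel-verified Lean document; each statement's English description precedes it below -/
import Mathlib

section
/- Let w : ℂ → ℂ be an entire function satisfying the Airy equation w''(z) = z·w(z) for all z ∈ ℂ, with w'(0) = 0 and w(0) ≠ 0. Then every zero of w lies on one of the three rays {z ∈ ℂ : Arg(z) = π/3 + 2kπ/3, k ∈ ℤ}; equivalently, if w(z) = 0 then z³ is a negative real number. -/
/-!
On the segment from `0` to `z`, the function `u t = w (t z)` solves `u'' = z³ t u`, and
`⟪u, u'⟫` vanishes at both ends. Integrating `⟪u, u'⟫' = ‖u'‖² + z³ t ‖u‖²` over `[0, 1]` gives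
`∫ ‖u'‖² + z³ ∫ t ‖u‖² = 0`, and the second integral is positive because `w` does not vanish
identically. This is the proof that a Sturm–Liouville problem has real eigenvalues, with `z³` as
the eigenvalue; for `w'' = z ^ n w` the same computation has the weight `t ^ n` and the eigenvalue
`z ^ (n + 2)`.
-/

open Filter MeasureTheory Set Topology
open scoped Interval InnerProductSpace

section Energy

variable {𝕜 E : Type*} [RCLike 𝕜] [NormedAddCommGroup E] [InnerProductSpace 𝕜 E]
  [NormedSpace ℝ E] {u v : ℝ → E} {q : ℝ → ℝ} {μ : 𝕜} {a b : ℝ}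

theorem integral_norm_sq_add_mul_integral_eq_inner_sub_inner
    (hu : ∀ t ∈ [[a, b]], HasDerivAt u (v t) t)
    (hv : ∀ t ∈ [[a, b]], HasDerivAt v ((μ * (q t : 𝕜)) • u t) t)
    (hq : IntervalIntegrable q volume a b) :
    ((∫ t in a..b, ‖v t‖ ^ 2 : ℝ) : 𝕜) + μ * ((∫ t in a..b, q t * ‖u t‖ ^ 2 : ℝ) : 𝕜) =
      ⟪u b, v b⟫_𝕜 - ⟪u a, v a⟫_𝕜 := by
  have hu_cont : ContinuousOn u [[a, b]] := HasDerivAt.continuousOn hu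
  have hv_cont : ContinuousOn v [[a, b]] := HasDerivAt.continuousOn hv
  have hderiv : ∀ t ∈ [[a, b]], HasDerivAt (fun s ↦ ⟪u s, v s⟫_𝕜)
      (((‖v t‖ ^ 2 : ℝ) : 𝕜) + μ * ((q t * ‖u t‖ ^ 2 : ℝ) : 𝕜)) t := fun t ht ↦ by
    refine ((hu t ht).inner 𝕜 (hv t ht)).congr_deriv ?_
    rw [inner_smul_right, inner_self_eq_norm_sq_to_K, inner_self_eq_norm_sq_to_K]
    push_cast
    ring
  have hv_int : IntervalIntegrable (fun t ↦ ((‖v t‖ ^ 2 : ℝ) : 𝕜)) volume a b :=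
    (RCLike.continuous_ofReal.comp_continuousOn (hv_cont.norm.pow 2)).intervalIntegrable
  have hu_int : IntervalIntegrable (fun t ↦ μ * ((q t * ‖u t‖ ^ 2 : ℝ) : 𝕜)) volume a b :=
    have hqu := hq.mul_continuousOn (hu_cont.norm.pow 2)
    IntervalIntegrable.const_mul ⟨hqu.1.ofReal, hqu.2.ofReal⟩ μ
  rw [← intervalIntegral.integral_eq_sub_of_hasDerivAt hderiv (hv_int.add hu_int),
    intervalIntegral.integral_add hv_int hu_int, intervalIntegral.integral_const_mul,
    RCLike.intervalIntegral_ofReal, RCLike.intervalIntegral_ofReal]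

theorem exists_nonpos_eq_ofReal_of_inner_eq_inner (hab : a < b)
    (hu : ∀ t ∈ Icc a b, HasDerivAt u (v t) t)
    (hv : ∀ t ∈ Icc a b, HasDerivAt v ((μ * (q t : 𝕜)) • u t) t)
    (hq : ContinuousOn q (Icc a b)) (hq_nonneg : ∀ t ∈ Icc a b, 0 ≤ q t)
    (hpos : ∃ t ∈ Icc a b, 0 < q t ∧ u t ≠ 0) (hbdry : ⟪u a, v a⟫_𝕜 = ⟪u b, v b⟫_𝕜) :
    ∃ r : ℝ, r ≤ 0 ∧ μ = (r : 𝕜) := by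
  set A : ℝ := ∫ t in a..b, ‖v t‖ ^ 2
  set B : ℝ := ∫ t in a..b, q t * ‖u t‖ ^ 2
  have henergy : (A : 𝕜) + μ * (B : 𝕜) = 0 := by
    rw [← uIcc_of_le hab.le] at hu hv hq
    rw [integral_norm_sq_add_mul_integral_eq_inner_sub_inner hu hv hq.intervalIntegrable, hbdry,
      sub_self]
  have hA : 0 ≤ A := intervalIntegral.integral_nonneg hab.le fun t _ ↦ sq_nonneg ‖v t‖
  have hB : 0 < B := by
    have hu_cont : ContinuousOn u (Icc a b) := HasDerivAt.continuousOn hu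
    obtain ⟨t, ht, hqt, hut⟩ := hpos
    exact intervalIntegral.integral_pos hab (hq.mul (hu_cont.norm.pow 2))
      (fun s hs ↦ mul_nonneg (hq_nonneg s (Ioc_subset_Icc_self hs)) (sq_nonneg _))
      ⟨t, ht, by positivity⟩
  have hB_ne : (B : 𝕜) ≠ 0 := RCLike.ofReal_ne_zero.2 hB.ne'
  refine ⟨-A / B, div_nonpos_of_nonpos_of_nonneg (neg_nonpos.2 hA) hB.le, ?_⟩
  push_cast
  rw [eq_div_iff hB_ne]
  linear_combination henergy

end Energy

section Entire

variable {E : Type*} [NormedAddCommGroup E] [NormedSpace ℂ E]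

theorem hasDerivAt_comp_ofReal_mul {f : ℂ → E} (hf : Differentiable ℂ f) (z : ℂ) (t : ℝ) :
    HasDerivAt (fun s : ℝ ↦ f (s * z)) (z • deriv f (t * z)) t := by
  have hline : HasDerivAt (fun s : ℝ ↦ (s : ℂ) * z) z t := by
    simpa using (Complex.ofRealCLM.hasDerivAt (x := t)).mul_const z
  exact (hf (t * z)).hasDerivAt.scomp t hline

theorem exists_mem_Ioo_apply_ofReal_mul_ne_zero [CompleteSpace E] {f : ℂ → E}
    (hf : Differentiable ℂ f) (hne : f ≠ 0) {z : ℂ} (hz : z ≠ 0) :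
    ∃ t ∈ Ioo (0 : ℝ) 1, f (t * z) ≠ 0 := by
  by_contra! hzero
  have hsegment : Tendsto (fun t : ℝ ↦ (t : ℂ) * z) (𝓝[>] 0) (𝓝[≠] 0) := by
    refine tendsto_nhdsWithin_iff.2 ⟨?_, ?_⟩
    · exact ((by fun_prop : Continuous fun t : ℝ ↦ (t : ℂ) * z).tendsto' 0 0
        (by simp)).mono_left nhdsWithin_le_nhds
    · filter_upwards [self_mem_nhdsWithin] with t ht
      exact mul_ne_zero (Complex.ofReal_ne_zero.2 (ne_of_gt ht)) hz
  have hfrequently : ∃ᶠ ζ in 𝓝[≠] (0 : ℂ), f ζ = 0 :=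
    hsegment.frequently <| Eventually.frequently <| by
      filter_upwards [Ioo_mem_nhdsGT zero_lt_one] with t ht using hzero t ht
  exact hne <| AnalyticOnNhd.eq_of_frequently_eq (fun ζ _ ↦ hf.analyticAt ζ)
    (fun _ _ ↦ analyticAt_const) hfrequently

end Entire

theorem stmt_3_general {E : Type*} [NormedAddCommGroup E] [InnerProductSpace ℂ E]
    [CompleteSpace E] (n : ℕ) (w : ℂ → E) (hw : Differentiable ℂ w)
    (heq : ∀ z : ℂ, deriv (deriv w) z = z ^ n • w z)
    (h0 : ⟪w 0, deriv w 0⟫_ℂ = 0) (hne : w ≠ 0) :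
    ∀ z : ℂ, z ≠ 0 → ⟪w z, deriv w z⟫_ℂ = 0 → ∃ r : ℝ, r < 0 ∧ z ^ (n + 2) = (r : ℂ) := by
  intro z hz hwz
  have hv (t : ℝ) : HasDerivAt (fun s : ℝ ↦ z • deriv w (s * z))
      ((z ^ (n + 2) * ((t ^ n : ℝ) : ℂ)) • w (t * z)) t := by
    refine ((hasDerivAt_comp_ofReal_mul hw.deriv z t).const_smul z).congr_deriv ?_
    rw [heq, smul_smul, smul_smul]
    congr 1
    push_cast
    ring
  have hpos : ∃ t ∈ Icc (0 : ℝ) 1, 0 < t ^ n ∧ w (t * z) ≠ 0 := by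
    obtain ⟨t, ht, hwt⟩ := exists_mem_Ioo_apply_ofReal_mul_ne_zero hw hne hz
    exact ⟨t, Ioo_subset_Icc_self ht, pow_pos ht.1 n, hwt⟩
  obtain ⟨r, hr_nonpos, hr⟩ := exists_nonpos_eq_ofReal_of_inner_eq_inner zero_lt_one
    (fun t _ ↦ hasDerivAt_comp_ofReal_mul hw z t) (fun t _ ↦ hv t)
    (continuous_pow n).continuousOn (fun t ht ↦ pow_nonneg ht.1 n) hpos
    (by simp [inner_smul_right, h0, hwz])
  refine ⟨r, hr_nonpos.lt_of_ne fun hr_zero ↦ pow_ne_zero (n + 2) hz ?_, hr⟩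
  simpa only [hr_zero, RCLike.ofReal_zero] using hr

/-- Every zero of an entire solution of the Airy equation `w'' = z w` with `w'(0) = 0`,
`w(0) ≠ 0`, lies on one of the rays `Arg z = π/3 + 2kπ/3`; equivalently, `z^3` is a
negative real number at every zero `z` of `w`. -/
theorem stmt_3 (w : ℂ → ℂ) (hw : Differentiable ℂ w)
    (heq : ∀ z : ℂ, deriv (deriv w) z = z * w z)
    (h0 : deriv w 0 = 0) (hw0 : w 0 ≠ 0) :
    ∀ z : ℂ, w z = 0 → ∃ r : ℝ, r < 0 ∧ z ^ 3 = (r : ℂ) := fun z hz ↦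
  stmt_3_general 1 w hw (by simpa using heq) (by simp [h0]) (fun h ↦ hw0 (congrFun h 0)) z
    (fun h ↦ hw0 (h ▸ hz)) (by simp [hz])
end

section
/- Let w : ℂ → ℂ be an entire function satisfying the Airy equation w''(z) = z·w(z) for all z ∈ ℂ, with w'(0) = 0 and w(0) ≠ 0. Then w has no zeros in the open sector {z ∈ ℂ : z ≠ 0 and Arg(z) ∈ (−π/3, π/3)}; that is, w(z) ≠ 0 for every nonzero z whose argument lies strictly between −π/3 and π/3. -/
/-!
For `u t = w (t * z)`, the equation `w'' = ζ ^ n * w` reads `u'' = t ^ n * z ^ (n + 2) * u`, so that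
`(conj u * u')' = |u'| ^ 2 + t ^ n * z ^ (n + 2) * |u| ^ 2`. If `|arg z| < π / (n + 2)`, a single
rotation `c` sends `1`, `z` and `z ^ (n + 2)` to the open right half-plane, which makes
`Re (c * conj u * u')` nondecreasing. This function is nonnegative at `t = 0` by the initial
condition and vanishes at `t = 1` if `w z = 0`; it is then constant, so its derivative vanishes, and
hence so does `u`.
-/

open Set ComplexConjugate
open scoped InnerProductSpace

lemma hasDerivAt_eq_zero_of_nonneg_of_le {F F' : ℝ → ℝ} {a b : ℝ}
    (hcont : ContinuousOn F (Icc a b)) (hderiv : ∀ t ∈ Ioo a b, HasDerivAt F (F' t) t)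
    (hnonneg : ∀ t ∈ Ioo a b, 0 ≤ F' t) (hle : F b ≤ F a) :
    ∀ t ∈ Ioo a b, F' t = 0 := by
  intro t ht
  have hab : a ≤ b := (ht.1.trans ht.2).le
  have hmono : MonotoneOn F (Icc a b) :=
    monotoneOn_of_hasDerivWithinAt_nonneg (convex_Icc a b) hcont
      (fun s hs ↦ (hderiv s (interior_Icc.subset hs)).hasDerivWithinAt)
      (fun s hs ↦ hnonneg s (interior_Icc.subset hs))
  have hconst : ∀ s ∈ Icc a b, F s = F a := fun s hs ↦
    le_antisymm ((hmono hs (right_mem_Icc.mpr hab) hs.2).trans hle)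
      (hmono (left_mem_Icc.mpr hab) hs hs.1)
  have hlocal : F =ᶠ[nhds t] fun _ ↦ F a := by
    filter_upwards [Icc_mem_nhds ht.1 ht.2] with s hs using hconst s hs
  exact (hderiv t ht).unique ((hasDerivAt_const t (F a)).congr_of_eventuallyEq hlocal)

section SecondOrder

variable {𝕜 E : Type*} [RCLike 𝕜] [NormedAddCommGroup E] [InnerProductSpace 𝕜 E]
  [NormedSpace ℝ E] {u v : ℝ → E}

lemma hasDerivAt_re_mul_inner_of_secondOrder {t : ℝ} {q : 𝕜} (c : 𝕜)
    (hu : HasDerivAt u (v t) t) (hv : HasDerivAt v (q • u t) t) :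
    HasDerivAt (fun s ↦ RCLike.re (c * ⟪u s, v s⟫_𝕜))
      (RCLike.re c * ‖v t‖ ^ 2 + RCLike.re (c * q) * ‖u t‖ ^ 2) t := by
  refine (RCLike.reCLM.hasFDerivAt.comp_hasDerivAt t
    ((hu.inner 𝕜 hv).const_mul c)).congr_deriv ?_
  have hexpand : c * (⟪u t, q • u t⟫_𝕜 + ⟪v t, v t⟫_𝕜)
      = ((‖v t‖ ^ 2 : ℝ) : 𝕜) * c + ((‖u t‖ ^ 2 : ℝ) : 𝕜) * (c * q) := by
    rw [inner_smul_right, inner_self_eq_norm_sq_to_K, inner_self_eq_norm_sq_to_K]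
    push_cast
    ring
  rw [hexpand, RCLike.reCLM_apply, map_add, RCLike.re_ofReal_mul, RCLike.re_ofReal_mul]
  ring

lemma eqOn_zero_of_secondOrder {a b : ℝ} (hab : a < b) {q : ℝ → 𝕜} {c : 𝕜}
    (hu : ContinuousOn u (Icc a b)) (hv : ContinuousOn v (Icc a b))
    (hu' : ∀ t ∈ Ioo a b, HasDerivAt u (v t) t)
    (hv' : ∀ t ∈ Ioo a b, HasDerivAt v (q t • u t) t)
    (hc : 0 ≤ RCLike.re c) (hq : ∀ t ∈ Ioo a b, 0 < RCLike.re (c * q t))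
    (hle : RCLike.re (c * ⟪u b, v b⟫_𝕜) ≤ RCLike.re (c * ⟪u a, v a⟫_𝕜)) :
    EqOn u 0 (Icc a b) := by
  have hkinetic (t : ℝ) : 0 ≤ RCLike.re c * ‖v t‖ ^ 2 := by positivity
  have hpotential : ∀ t ∈ Ioo a b, 0 ≤ RCLike.re (c * q t) * ‖u t‖ ^ 2 := fun t ht ↦
    mul_nonneg (hq t ht).le (sq_nonneg _)
  have hzero := hasDerivAt_eq_zero_of_nonneg_of_le
    (RCLike.continuous_re.comp_continuousOn (continuousOn_const.mul (hu.inner hv)))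
    (fun t ht ↦ hasDerivAt_re_mul_inner_of_secondOrder c (hu' t ht) (hv' t ht))
    (fun t ht ↦ add_nonneg (hkinetic t) (hpotential t ht)) hle
  have hinterior : EqOn u 0 (Ioo a b) := by
    intro t ht
    have hprod := ((add_eq_zero_iff_of_nonneg (hkinetic t) (hpotential t ht)).mp (hzero t ht)).2
    have hnorm := (mul_eq_zero.mp hprod).resolve_left (hq t ht).ne'
    exact norm_eq_zero.mp (pow_eq_zero_iff two_ne_zero |>.mp hnorm)
  refine hinterior.of_subset_closure hu continuousOn_const Ioo_subset_Icc_self ?_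
  rw [closure_Ioo hab.ne]

end SecondOrder

section ComplexPlane

open Complex

lemma ne_zero_of_deriv_deriv_eq_mul {w p : ℂ → ℂ} (hw : Differentiable ℂ w)
    (hode : ∀ ζ, deriv (deriv w) ζ = p ζ * w ζ) {x y c : ℂ} (hx : w x ≠ 0) (hc : 0 ≤ c.re)
    (hp : ∀ ζ ∈ openSegment ℝ x y, 0 < (c * ((y - x) ^ 2 * p ζ)).re)
    (hinit : 0 ≤ (c * ((y - x) * deriv w x * conj (w x))).re) :
    w y ≠ 0 := by
  intro hy
  let γ : ℝ → ℂ := AffineMap.lineMap x y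
  have hγ (t : ℝ) : HasDerivAt γ (y - x) t := AffineMap.hasDerivAt_lineMap
  have hu (t : ℝ) : HasDerivAt (w ∘ γ) ((y - x) * deriv w (γ t)) t :=
    ((hw (γ t)).hasDerivAt.comp t (hγ t)).congr_deriv (mul_comm _ _)
  have hv (t : ℝ) : HasDerivAt (fun s ↦ (y - x) * deriv w (γ s))
      (((y - x) ^ 2 * p (γ t)) • (w ∘ γ) t) t := by
    refine (((hw.deriv (γ t)).hasDerivAt.comp t (hγ t)).const_mul (y - x)).congr_deriv ?_
    rw [hode, smul_eq_mul, Function.comp_apply]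
    ring
  have hvanish : EqOn (w ∘ γ) 0 (Icc 0 1) :=
    eqOn_zero_of_secondOrder (𝕜 := ℂ) zero_lt_one
      (HasDerivAt.continuousOn fun t _ ↦ hu t) (HasDerivAt.continuousOn fun t _ ↦ hv t)
      (fun t _ ↦ hu t) (fun t _ ↦ hv t) hc
      (fun t ht ↦ hp _ (openSegment_eq_image_lineMap ℝ x y ▸ mem_image_of_mem _ ht))
      (by simpa [γ, hy] using hinit)
  exact hx (by simpa [γ] using hvanish (left_mem_Icc.mpr zero_le_one))

lemma re_exp_mul_I_mul_pow (φ : ℝ) (z : ℂ) (k : ℕ) :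
    (exp (φ * I) * z ^ k).re = ‖z‖ ^ k * Real.cos (φ + k * arg z) := by
  have hpolar : exp (φ * I) * z ^ k
      = ((‖z‖ ^ k : ℝ) : ℂ) * exp (((φ + k * arg z : ℝ) : ℂ) * I) := by
    conv_lhs => rw [← norm_mul_exp_arg_mul_I z]
    rw [mul_pow, ← exp_nat_mul, mul_left_comm, ← exp_add]
    push_cast
    ring_nf
  rw [hpolar, re_ofReal_mul, exp_ofReal_mul_I_re]

-- The rotation by `-m * arg z / 2` centres the arguments of `1, z, …, z ^ m` around `0`.
lemma exists_forall_re_mul_pow_pos {z : ℂ} (hz : z ≠ 0) {m : ℕ} (harg : m * |arg z| < Real.pi) :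
    ∃ c : ℂ, ∀ k ≤ m, 0 < (c * z ^ k).re := by
  refine ⟨exp ((-(m * arg z / 2) : ℝ) * I), fun k hk ↦ ?_⟩
  rw [re_exp_mul_I_mul_pow]
  have hcoeff : |(k : ℝ) - m / 2| ≤ m / 2 := by
    have hk' : (k : ℝ) ≤ m := by exact_mod_cast hk
    rw [abs_le]
    constructor <;> linarith [k.cast_nonneg (α := ℝ)]
  have hangle : |-(m * arg z / 2) + k * arg z| < Real.pi / 2 := calc
    |-(m * arg z / 2) + k * arg z| = |(k : ℝ) - m / 2| * |arg z| := by rw [← abs_mul]; ring_nf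
    _ ≤ m / 2 * |arg z| := by gcongr
    _ < Real.pi / 2 := by linarith
  exact mul_pos (pow_pos (norm_pos_iff.mpr hz) k) (Real.cos_pos_of_mem_Ioo (abs_lt.mp hangle))

end ComplexPlane

theorem stmt_4_general (n : ℕ) {w : ℂ → ℂ} (hw : Differentiable ℂ w)
    (hode : ∀ ζ : ℂ, deriv (deriv w) ζ = ζ ^ n * w ζ) {r : ℝ} (hr : 0 ≤ r)
    (hinit : deriv w 0 = r * w 0) (hw0 : w 0 ≠ 0) {z : ℂ} (hz : z ≠ 0)
    (harg : (n + 2) * |Complex.arg z| < Real.pi) :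
    w z ≠ 0 := by
  obtain ⟨c, hc⟩ := exists_forall_re_mul_pow_pos hz (m := n + 2) (by exact_mod_cast harg)
  refine ne_zero_of_deriv_deriv_eq_mul hw hode (c := c) hw0 (by simpa using (hc 0 (by lia)).le)
    ?_ ?_
  · rw [openSegment_eq_image_lineMap]
    rintro _ ⟨t, ht, rfl⟩
    have hray : c * ((z - 0) ^ 2 * (AffineMap.lineMap 0 z t : ℂ) ^ n)
        = ((t ^ n : ℝ) : ℂ) * (c * z ^ (n + 2)) := by
      rw [AffineMap.lineMap_apply_module', sub_zero, add_zero, Complex.real_smul]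
      push_cast
      ring
    rw [hray, Complex.re_ofReal_mul]
    exact mul_pos (pow_pos ht.1 n) (hc (n + 2) le_rfl)
  · have hrobin : c * ((z - 0) * deriv w 0 * conj (w 0))
        = ((r * ‖w 0‖ ^ 2 : ℝ) : ℂ) * (c * z ^ 1) := by
      push_cast
      rw [hinit, ← Complex.mul_conj']
      ring
    rw [hrobin, Complex.re_ofReal_mul]
    exact mul_nonneg (by positivity) (hc 1 (by lia)).le

/-- An entire solution of the Airy equation `w'' = z w` with `w'(0) = 0`, `w(0) ≠ 0`
has no zeros in the open sector `{z ≠ 0 : Arg z ∈ (-π/3, π/3)}`. -/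
theorem stmt_4 (w : ℂ → ℂ) (hw : Differentiable ℂ w)
    (heq : ∀ z : ℂ, deriv (deriv w) z = z * w z)
    (h0 : deriv w 0 = 0) (hw0 : w 0 ≠ 0) :
    ∀ z : ℂ, z ≠ 0 → Complex.arg z ∈ Set.Ioo (-(Real.pi / 3)) (Real.pi / 3) →
      w z ≠ 0 := by
  intro z hz harg
  exact stmt_4_general 1 hw (by simpa using heq) le_rfl (by simpa using h0) hw0 hz
    (by push_cast; linarith [abs_lt.mpr harg])
end

section
/- There exists a universal constant C > 0, independent of M, ξ, f and h, with the following property. Let M > 0, ξ ∈ ℝ, let h : [0,M] → ℂ be continuous, and let f : [0,M] → ℂ be twice continuously differentiable with f''(y) = i·ξ·y·f(y) − h(y) for all y ∈ [0,M], f'(0) = 0 and f(M) = 0. Then ξ²·∫₀^M y²|f(y)|² dy + |ξ|^{5/3}·∫₀^M y|f(y)|² dy + |ξ|^{4/3}·∫₀^M |f(y)|² dy + |ξ|·∫₀^M y|f'(y)|² dy + |ξ|^{2/3}·∫₀^M |f'(y)|² dy + ∫₀^M |f''(y)|² dy ≤ C·∫₀^M |h(y)|² dy. -/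
/-!
Pairing `i ξ y f - f'' = h` with `f` and with `y f` and integrating by parts gives, from real and
imaginary parts, with all norms in `L²(0, M)`,

* `‖f'‖²` and `|ξ| ∫ y |f|²` are at most `‖f‖ ‖h‖`;
* `∫ y |f'|²` and `|ξ| ‖y f‖²` are at most `‖y f‖ ‖h‖ + ‖f‖ ‖f'‖`.

These do not control `‖f‖`; Heisenberg's inequality `‖f‖² ≤ 2 ‖y f‖ ‖f'‖` does. In the variables
`w = |ξ|^(1/3) ‖f'‖`, `x = |ξ|^(2/3) ‖f‖`, `z = |ξ| ‖y f‖` the system no longer contains `ξ`, and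
Young's inequality absorbs `w`, `x` and `z` into `‖h‖`. The bound on `f''` is then read off the
equation.
-/

open MeasureTheory Set Complex
open scoped InnerProductSpace

section L2

variable {α 𝕜 E : Type*} [MeasurableSpace α] {μ : Measure α} [RCLike 𝕜] [NormedAddCommGroup E]

lemma memLp_restrict_of_continuousOn [TopologicalSpace α] [OpensMeasurableSpace α]
    [TopologicalSpace.PseudoMetrizableSpace α] [IsFiniteMeasureOnCompacts μ] {K : Set α}
    {f : α → E} (hK : IsCompact K) (hKm : MeasurableSet K) (hf : ContinuousOn f K) (p : ENNReal) :
    MemLp f p (μ.restrict K) := by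
  have : IsFiniteMeasure (μ.restrict K) := ⟨by simpa using hK.measure_lt_top⟩
  obtain ⟨C, hC⟩ := hK.exists_bound_of_continuousOn hf
  exact MemLp.of_bound (hf.aestronglyMeasurable_of_isCompact hK hKm) C
    (ae_restrict_of_forall_mem hKm hC)

lemma memLp_restrict_Icc_of_continuousOn {a b : ℝ} {f : ℝ → E} (hf : ContinuousOn f (Icc a b))
    (p : ENNReal) : MemLp f p (volume.restrict (Icc a b)) :=
  memLp_restrict_of_continuousOn isCompact_Icc measurableSet_Icc hf p

lemma lpNorm_two_sq {f : α → E} (hf : AEStronglyMeasurable f μ) :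
    lpNorm f 2 μ ^ 2 = ∫ x, ‖f x‖ ^ 2 ∂μ := by
  have hint : 0 ≤ ∫ x, ‖f x‖ ^ 2 ∂μ := integral_nonneg fun x ↦ sq_nonneg _
  simp [lpNorm_eq_integral_norm_rpow_toReal, hf, ← Real.sqrt_eq_rpow, ← one_div, Real.sq_sqrt hint]

variable [InnerProductSpace 𝕜 E]

lemma inner_toLp_toLp_ae_eq {f g : α → E} (hf : MemLp f 2 μ) (hg : MemLp g 2 μ) :
    (fun x ↦ inner 𝕜 (hf.toLp f x) (hg.toLp g x)) =ᵐ[μ] fun x ↦ inner 𝕜 (f x) (g x) := by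
  filter_upwards [hf.coeFn_toLp, hg.coeFn_toLp] with x hfx hgx
  rw [hfx, hgx]

lemma integrable_inner_of_memLp_two {f g : α → E} (hf : MemLp f 2 μ) (hg : MemLp g 2 μ) :
    Integrable (fun x ↦ inner 𝕜 (f x) (g x)) μ :=
  (L2.integrable_inner (hf.toLp f) (hg.toLp g)).congr (inner_toLp_toLp_ae_eq hf hg)

lemma norm_integral_inner_le_lpNorm_mul_lpNorm {f g : α → E} (hf : MemLp f 2 μ)
    (hg : MemLp g 2 μ) :
    ‖∫ x, inner 𝕜 (f x) (g x) ∂μ‖ ≤ lpNorm f 2 μ * lpNorm g 2 μ := by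
  rw [← integral_congr_ae (inner_toLp_toLp_ae_eq hf hg), ← L2.inner_def,
    ← toReal_eLpNorm hf.1, ← toReal_eLpNorm hg.1, ← Lp.norm_toLp f hf, ← Lp.norm_toLp g hg]
  exact norm_inner_le_norm _ _

end L2

section IntegrationByParts

lemma integral_Icc_eq_sub_of_hasDerivWithinAt {F : Type*} [NormedAddCommGroup F] [NormedSpace ℝ F]
    [CompleteSpace F] {a b : ℝ} (hab : a ≤ b) {φ φ' : ℝ → F}
    (hφ : ∀ y ∈ Icc a b, HasDerivWithinAt φ (φ' y) (Icc a b) y)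
    (hφ' : IntegrableOn φ' (Icc a b)) :
    ∫ y in Icc a b, φ' y = φ b - φ a := by
  rw [integral_Icc_eq_integral_Ioc, ← intervalIntegral.integral_of_le hab]
  exact intervalIntegral.integral_eq_sub_of_hasDerivAt_of_le hab
    (fun y hy ↦ (hφ y hy).continuousWithinAt)
    (fun y hy ↦ (hφ y (Ioo_subset_Icc_self hy)).hasDerivAt (Icc_mem_nhds hy.1 hy.2))
    ((intervalIntegrable_iff_integrableOn_Icc_of_le hab).2 hφ')

variable {𝕜 E : Type*} [RCLike 𝕜] [NormedAddCommGroup E] [InnerProductSpace 𝕜 E] [NormedSpace ℝ E]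
  {a b : ℝ} {f f' g g' : ℝ → E}

lemma integral_inner_add_inner_deriv_eq_sub (hab : a ≤ b)
    (hf : ∀ y ∈ Icc a b, HasDerivWithinAt f (f' y) (Icc a b) y)
    (hg : ∀ y ∈ Icc a b, HasDerivWithinAt g (g' y) (Icc a b) y)
    (hf' : MemLp f' 2 (volume.restrict (Icc a b))) (hg' : MemLp g' 2 (volume.restrict (Icc a b))) :
    ∫ y in Icc a b, (inner 𝕜 (f y) (g' y) + inner 𝕜 (f' y) (g y))
      = inner 𝕜 (f b) (g b) - inner 𝕜 (f a) (g a) := by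
  have memLp_of_deriv {u u' : ℝ → E}
      (hu : ∀ y ∈ Icc a b, HasDerivWithinAt u (u' y) (Icc a b) y) :
      MemLp u 2 (volume.restrict (Icc a b)) :=
    memLp_restrict_Icc_of_continuousOn (fun y hy ↦ (hu y hy).continuousWithinAt) 2
  exact integral_Icc_eq_sub_of_hasDerivWithinAt hab (fun y hy ↦ (hf y hy).inner 𝕜 (hg y hy))
    ((integrable_inner_of_memLp_two (memLp_of_deriv hf) hg').add
      (integrable_inner_of_memLp_two hf' (memLp_of_deriv hg)))

/-- Heisenberg's uncertainty inequality on an interval. -/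
lemma lpNorm_sq_le_two_mul_lpNorm_smul_mul_lpNorm_deriv {E : Type*} [NormedAddCommGroup E]
    [InnerProductSpace ℝ E] {a b : ℝ} {f f' : ℝ → E} (hab : a ≤ b)
    (hf : ∀ y ∈ Icc a b, HasDerivWithinAt f (f' y) (Icc a b) y)
    (hf' : MemLp f' 2 (volume.restrict (Icc a b)))
    (hbdry : b * ‖f b‖ ^ 2 ≤ a * ‖f a‖ ^ 2) :
    lpNorm f 2 (volume.restrict (Icc a b)) ^ 2
      ≤ 2 * lpNorm (fun y ↦ y • f y) 2 (volume.restrict (Icc a b))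
        * lpNorm f' 2 (volume.restrict (Icc a b)) := by
  have f_cont : ContinuousOn f (Icc a b) := fun y hy ↦ (hf y hy).continuousWithinAt
  have f_memLp : MemLp f 2 (volume.restrict (Icc a b)) :=
    memLp_restrict_Icc_of_continuousOn f_cont 2
  have yf_memLp : MemLp (fun y ↦ y • f y) 2 (volume.restrict (Icc a b)) :=
    memLp_restrict_Icc_of_continuousOn (by fun_prop) 2
  have yf'_memLp : MemLp (fun y ↦ y • f' y) 2 (volume.restrict (Icc a b)) :=
    hf'.smul (memLp_restrict_Icc_of_continuousOn continuousOn_id ⊤)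
  have yf_deriv (y) (hy : y ∈ Icc a b) :
      HasDerivWithinAt (fun y ↦ y • f y) (y • f' y + f y) (Icc a b) y := by
    simpa using (hasDerivWithinAt_id y (Icc a b)).fun_smul (hf y hy)
  have parts := integral_inner_add_inner_deriv_eq_sub (𝕜 := ℝ) hab hf yf_deriv hf'
    (yf'_memLp.add f_memLp)
  have integrand (y : ℝ) : ⟪f y, y • f' y + f y⟫_ℝ + ⟪f' y, y • f y⟫_ℝ
      = ‖f y‖ ^ 2 + 2 * ⟪y • f y, f' y⟫_ℝ := by
    simp only [inner_add_right, inner_smul_right, real_inner_smul_left,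
      real_inner_self_eq_norm_sq, real_inner_comm (f y) (f' y)]
    ring
  simp only [integrand] at parts
  rw [integral_add f_memLp.norm.integrable_sq
    ((integrable_inner_of_memLp_two yf_memLp hf').const_mul 2), integral_const_mul,
    real_inner_smul_right, real_inner_smul_right, real_inner_self_eq_norm_sq,
    real_inner_self_eq_norm_sq] at parts
  have cauchySchwarz := norm_integral_inner_le_lpNorm_mul_lpNorm (𝕜 := ℝ) yf_memLp hf'
  rw [Real.norm_eq_abs] at cauchySchwarz
  rw [lpNorm_two_sq f_memLp.1]
  linarith [neg_abs_le (∫ y in Icc a b, ⟪y • f y, f' y⟫_ℝ)]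

end IntegrationByParts

lemma sum_sq_le_of_energy_inequalities {x z w H P S F : ℝ} (hw : w ^ 2 ≤ x * H) (hP : P ≤ x * H)
    (hz : z ^ 2 ≤ z * H + x * w) (hS : S ≤ z * H + x * w) (hx : x ^ 2 ≤ 2 * z * w)
    (hF : F ≤ 2 * z ^ 2 + 2 * H ^ 2) :
    z ^ 2 + P + x ^ 2 + S + w ^ 2 + F ≤ 60 * H ^ 2 := by
  -- The cross terms below are those of the sum `25 hw + hP + 10 hz + hS + 8 hx + hF`.
  have hzw : 16 * (z * w) ≤ 5 * z ^ 2 + 64 / 5 * w ^ 2 := by linarith [sq_nonneg (5 * z - 8 * w)]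
  have hxw : 11 * (x * w) ≤ 11 / 4 * x ^ 2 + 11 * w ^ 2 := by linarith [sq_nonneg (x - 2 * w)]
  have hzH : 11 * (z * H) ≤ 2 * z ^ 2 + 121 / 8 * H ^ 2 := by
    linarith [sq_nonneg (4 * z - 11 * H)]
  have hxH : 26 * (x * H) ≤ 4 * x ^ 2 + 169 / 4 * H ^ 2 := by
    linarith [sq_nonneg (4 * x - 13 * H)]
  linarith [sq_nonneg w, sq_nonneg x, sq_nonneg H]

lemma rescaled_sum_sq_le_of_energy_inequalities {r A B D H P S F : ℝ} (hr : 0 ≤ r)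
    (hA : A ^ 2 ≤ B * H) (hP : r ^ 3 * P ≤ B * H) (hD : r ^ 3 * D ^ 2 ≤ D * H + B * A)
    (hS : S ≤ D * H + B * A) (hB : B ^ 2 ≤ 2 * D * A) (hF : F ≤ 2 * (r ^ 3 * D) ^ 2 + 2 * H ^ 2) :
    r ^ 6 * D ^ 2 + r ^ 5 * P + r ^ 4 * B ^ 2 + r ^ 3 * S + r ^ 2 * A ^ 2 + F ≤ 60 * H ^ 2 := by
  have scaleFree := sum_sq_le_of_energy_inequalities (x := r ^ 2 * B) (z := r ^ 3 * D) (w := r * A)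
    (P := r ^ 5 * P) (S := r ^ 3 * S) (H := H) (by linear_combination r ^ 2 * hA)
    (by linear_combination r ^ 2 * hP) (by linear_combination r ^ 3 * hD)
    (by linear_combination r ^ 3 * hS) (by linear_combination r ^ 4 * hB) hF
  linarith

lemma rpow_ofNat_div_ofNat_eq_pow {x : ℝ} (hx : 0 ≤ x) (m n : ℕ) [m.AtLeastTwo]
    [n.AtLeastTwo] :
    x ^ ((ofNat(m) : ℝ) / ofNat(n)) = (x ^ (ofNat(n) : ℝ)⁻¹) ^ (ofNat(m) : ℕ) := by
  rw [← Real.rpow_ofNat, ← Real.rpow_mul hx, inv_mul_eq_div]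

/-- `f` solves `i q f - f'' = h` on `[a, b]` with `f'` as its derivative and an `L²` source `h`.
The derivatives are one-sided at the endpoints, and `f''` is not a separate argument: it is
`i q f - h`. The Fourier transform in `x` of `y ∂ₓf - ∂_y²f = h` is the case `q y = ξ y`. -/
structure IsImaginaryPotentialSolution {E : Type*} [NormedAddCommGroup E] [InnerProductSpace ℂ E]
    (a b : ℝ) (q : ℝ → ℝ) (f f' h : ℝ → E) : Prop where
  hasDerivWithinAt : ∀ y ∈ Icc a b, HasDerivWithinAt f (f' y) (Icc a b) y
  hasDerivWithinAt_deriv :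
    ∀ y ∈ Icc a b, HasDerivWithinAt f' ((I * q y) • f y - h y) (Icc a b) y
  memLp_source : MemLp h 2 (volume.restrict (Icc a b))

namespace IsImaginaryPotentialSolution

variable {E : Type*} [NormedAddCommGroup E] [InnerProductSpace ℂ E] {a b ξ : ℝ} {w w' q : ℝ → ℝ}
  {f f' h : ℝ → E}

lemma continuousOn (hs : IsImaginaryPotentialSolution a b q f f' h) : ContinuousOn f (Icc a b) :=
  fun y hy ↦ (hs.hasDerivWithinAt y hy).continuousWithinAt

lemma continuousOn_deriv (hs : IsImaginaryPotentialSolution a b q f f' h) :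
    ContinuousOn f' (Icc a b) :=
  fun y hy ↦ (hs.hasDerivWithinAt_deriv y hy).continuousWithinAt

lemma memLp (hs : IsImaginaryPotentialSolution a b q f f' h) :
    MemLp f 2 (volume.restrict (Icc a b)) :=
  memLp_restrict_Icc_of_continuousOn hs.continuousOn 2

lemma memLp_smul (hs : IsImaginaryPotentialSolution a b q f f' h) (hw : ContinuousOn w (Icc a b)) :
    MemLp (fun y ↦ w y • f y) 2 (volume.restrict (Icc a b)) :=
  memLp_restrict_Icc_of_continuousOn (hw.smul hs.continuousOn) 2

lemma memLp_deriv (hs : IsImaginaryPotentialSolution a b q f f' h) :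
    MemLp f' 2 (volume.restrict (Icc a b)) :=
  memLp_restrict_Icc_of_continuousOn hs.continuousOn_deriv 2

lemma memLp_potential_smul (hs : IsImaginaryPotentialSolution a b q f f' h)
    (hq : ContinuousOn q (Icc a b)) :
    MemLp (fun y ↦ (I * q y) • f y) 2 (volume.restrict (Icc a b)) :=
  have f_cont := hs.continuousOn
  memLp_restrict_Icc_of_continuousOn (by fun_prop) 2

lemma memLp_deriv_deriv (hs : IsImaginaryPotentialSolution a b q f f' h)
    (hq : ContinuousOn q (Icc a b)) :
    MemLp (fun y ↦ (I * q y) • f y - h y) 2 (volume.restrict (Icc a b)) :=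
  (hs.memLp_potential_smul hq).sub hs.memLp_source

lemma weighted_energy_identity (hs : IsImaginaryPotentialSolution a b q f f' h) (hab : a ≤ b)
    (hq : ContinuousOn q (Icc a b)) (hw' : ContinuousOn w' (Icc a b))
    (hw : ∀ y ∈ Icc a b, HasDerivWithinAt w (w' y) (Icc a b) y)
    (hbdry : ⟪w b • f b, f' b⟫_ℂ = ⟪w a • f a, f' a⟫_ℂ) :
    ((∫ y in Icc a b, w y * ‖f' y‖ ^ 2 : ℝ) : ℂ)
        + I * (∫ y in Icc a b, w y * q y * ‖f y‖ ^ 2 : ℝ)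
      = (∫ y in Icc a b, ⟪w y • f y, h y⟫_ℂ) - ∫ y in Icc a b, ⟪w' y • f y, f' y⟫_ℂ := by
  have w_cont : ContinuousOn w (Icc a b) := fun y hy ↦ (hw y hy).continuousWithinAt
  have f_cont := hs.continuousOn
  have f'_cont := hs.continuousOn_deriv
  have parts := integral_inner_add_inner_deriv_eq_sub (𝕜 := ℂ) hab
    (fun y hy ↦ (hw y hy).smul (hs.hasDerivWithinAt y hy)) hs.hasDerivWithinAt_deriv
    (memLp_restrict_Icc_of_continuousOn (by fun_prop) 2) (hs.memLp_deriv_deriv hq)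
  have integrand (y : ℝ) :
      ⟪w y • f y, (I * q y) • f y - h y⟫_ℂ + ⟪w y • f' y + w' y • f y, f' y⟫_ℂ
      = ((w y * ‖f' y‖ ^ 2 : ℝ) + I * (w y * q y * ‖f y‖ ^ 2 : ℝ))
        - (⟪w y • f y, h y⟫_ℂ - ⟪w' y • f y, f' y⟫_ℂ) := by
    simp only [inner_sub_right, inner_add_left, inner_smul_left_eq_smul, inner_smul_right,
      inner_self_eq_norm_sq_to_K, real_smul, coe_algebraMap]
    push_cast
    ring
  have f'_int : IntegrableOn (fun y ↦ ((w y * ‖f' y‖ ^ 2 : ℝ) : ℂ)) (Icc a b) :=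
    ContinuousOn.integrableOn_Icc (by fun_prop)
  have f_int : IntegrableOn (fun y ↦ I * ((w y * q y * ‖f y‖ ^ 2 : ℝ) : ℂ)) (Icc a b) :=
    ContinuousOn.integrableOn_Icc (by fun_prop)
  have h_int : IntegrableOn (fun y ↦ ⟪w y • f y, h y⟫_ℂ) (Icc a b) :=
    integrable_inner_of_memLp_two (hs.memLp_smul w_cont) hs.memLp_source
  have w'_int : IntegrableOn (fun y ↦ ⟪w' y • f y, f' y⟫_ℂ) (Icc a b) :=
    integrable_inner_of_memLp_two (hs.memLp_smul hw') hs.memLp_deriv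
  simp only [Pi.smul_apply', integrand] at parts
  rw [hbdry, sub_self, integral_sub (f'_int.fun_add f_int) (h_int.fun_sub w'_int),
    integral_add f'_int f_int, integral_sub h_int w'_int, integral_const_mul,
    integral_complex_ofReal, integral_complex_ofReal] at parts
  exact sub_eq_zero.1 parts

lemma max_weighted_energy_le (hs : IsImaginaryPotentialSolution a b q f f' h) (hab : a ≤ b)
    (hq : ContinuousOn q (Icc a b)) (hw' : ContinuousOn w' (Icc a b))
    (hw : ∀ y ∈ Icc a b, HasDerivWithinAt w (w' y) (Icc a b) y)
    (hbdry : ⟪w b • f b, f' b⟫_ℂ = ⟪w a • f a, f' a⟫_ℂ) :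
    max |∫ y in Icc a b, w y * ‖f' y‖ ^ 2| |∫ y in Icc a b, w y * q y * ‖f y‖ ^ 2|
      ≤ lpNorm (fun y ↦ w y • f y) 2 (volume.restrict (Icc a b))
          * lpNorm h 2 (volume.restrict (Icc a b))
        + lpNorm (fun y ↦ w' y • f y) 2 (volume.restrict (Icc a b))
          * lpNorm f' 2 (volume.restrict (Icc a b)) := by
  have w_cont : ContinuousOn w (Icc a b) := fun y hy ↦ (hw y hy).continuousWithinAt
  set K := ∫ y in Icc a b, w y * ‖f' y‖ ^ 2
  set Q := ∫ y in Icc a b, w y * q y * ‖f y‖ ^ 2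
  calc max |K| |Q| ≤ ‖(K + I * Q : ℂ)‖ := max_le
        (by simpa using abs_re_le_norm (K + I * Q : ℂ))
        (by simpa using abs_im_le_norm (K + I * Q : ℂ))
    _ = ‖(∫ y in Icc a b, ⟪w y • f y, h y⟫_ℂ) - ∫ y in Icc a b, ⟪w' y • f y, f' y⟫_ℂ‖ := by
        rw [hs.weighted_energy_identity hab hq hw' hw hbdry]
    _ ≤ _ := (norm_sub_le _ _).trans (add_le_add
        (norm_integral_inner_le_lpNorm_mul_lpNorm (hs.memLp_smul w_cont) hs.memLp_source)
        (norm_integral_inner_le_lpNorm_mul_lpNorm (hs.memLp_smul hw') hs.memLp_deriv))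

lemma max_airy_energy_le (hs : IsImaginaryPotentialSolution a b (fun y ↦ ξ * y) f f' h)
    (hab : a ≤ b) (hbdry : ⟪f b, f' b⟫_ℂ = ⟪f a, f' a⟫_ℂ) :
    max (lpNorm f' 2 (volume.restrict (Icc a b)) ^ 2) (|ξ| * ∫ y in Icc a b, y * ‖f y‖ ^ 2)
      ≤ lpNorm f 2 (volume.restrict (Icc a b)) * lpNorm h 2 (volume.restrict (Icc a b)) := by
  have energy := hs.max_weighted_energy_le (w := fun _ ↦ 1) (w' := fun _ ↦ 0) hab (by fun_prop)
    continuousOn_const (fun y _ ↦ hasDerivWithinAt_const y _ 1) (by simpa using hbdry)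
  simp only [one_mul, one_smul, zero_smul, lpNorm_fun_zero, zero_mul, add_zero, mul_assoc,
    integral_const_mul, abs_mul] at energy
  rw [lpNorm_two_sq hs.memLp_deriv.1]
  refine le_trans ?_ energy
  gcongr <;> exact le_abs_self _

lemma max_airy_weighted_energy_le (hs : IsImaginaryPotentialSolution a b (fun y ↦ ξ * y) f f' h)
    (hab : a ≤ b) (hbdry : ⟪b • f b, f' b⟫_ℂ = ⟪a • f a, f' a⟫_ℂ) :
    max (∫ y in Icc a b, y * ‖f' y‖ ^ 2)
        (|ξ| * lpNorm (fun y ↦ y • f y) 2 (volume.restrict (Icc a b)) ^ 2)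
      ≤ lpNorm (fun y ↦ y • f y) 2 (volume.restrict (Icc a b))
          * lpNorm h 2 (volume.restrict (Icc a b))
        + lpNorm f 2 (volume.restrict (Icc a b)) * lpNorm f' 2 (volume.restrict (Icc a b)) := by
  have energy := hs.max_weighted_energy_le (w := id) (w' := fun _ ↦ 1) hab (by fun_prop)
    continuousOn_const (fun y _ ↦ hasDerivWithinAt_id y _) (by simpa using hbdry)
  have factor (y : ℝ) : y * (ξ * y) * ‖f y‖ ^ 2 = ξ * ‖y • f y‖ ^ 2 := by
    rw [norm_smul, Real.norm_eq_abs, mul_pow, sq_abs]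
    ring
  simp only [id, one_smul, factor, integral_const_mul, abs_mul] at energy
  rw [lpNorm_two_sq (hs.memLp_smul (w := fun y ↦ y) continuousOn_id).1]
  refine le_trans ?_ energy
  gcongr <;> exact le_abs_self _

lemma lpNorm_airy_deriv_deriv_sq_le
    (hs : IsImaginaryPotentialSolution a b (fun y ↦ ξ * y) f f' h) :
    lpNorm (fun y ↦ (I * (ξ * y : ℝ)) • f y - h y) 2 (volume.restrict (Icc a b)) ^ 2
      ≤ 2 * (|ξ| * lpNorm (fun y ↦ y • f y) 2 (volume.restrict (Icc a b))) ^ 2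
        + 2 * lpNorm h 2 (volume.restrict (Icc a b)) ^ 2 := by
  have potential : (fun y ↦ (I * (ξ * y : ℝ)) • f y) = (I * ξ) • fun y : ℝ ↦ y • f y := by
    ext y
    simp [← Complex.coe_smul, smul_smul, mul_assoc]
  calc lpNorm (fun y ↦ (I * (ξ * y : ℝ)) • f y - h y) 2 (volume.restrict (Icc a b)) ^ 2
    _ ≤ (lpNorm (fun y ↦ (I * (ξ * y : ℝ)) • f y) 2 (volume.restrict (Icc a b))
          + lpNorm h 2 (volume.restrict (Icc a b))) ^ 2 := by
        gcongr
        exacts [lpNorm_nonneg, lpNorm_sub_le (hs.memLp_potential_smul (by fun_prop)) one_le_two]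
    _ = (|ξ| * lpNorm (fun y ↦ y • f y) 2 (volume.restrict (Icc a b))
          + lpNorm h 2 (volume.restrict (Icc a b))) ^ 2 := by
        rw [potential, lpNorm_const_smul]
        simp
    _ ≤ _ := add_sq_le.trans_eq (mul_add _ _ _)

end IsImaginaryPotentialSolution

theorem stmt_6_general {E : Type*} [NormedAddCommGroup E] [InnerProductSpace ℂ E] {M ξ : ℝ}
    {f f' h : ℝ → E} (hM : 0 ≤ M)
    (hs : IsImaginaryPotentialSolution 0 M (fun y ↦ ξ * y) f f' h) (hleft : f' 0 = 0)
    (hright : f M = 0) :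
    ξ ^ 2 * (∫ y in Icc 0 M, y ^ 2 * ‖f y‖ ^ 2)
      + |ξ| ^ ((5 : ℝ) / 3) * (∫ y in Icc 0 M, y * ‖f y‖ ^ 2)
      + |ξ| ^ ((4 : ℝ) / 3) * (∫ y in Icc 0 M, ‖f y‖ ^ 2)
      + |ξ| * (∫ y in Icc 0 M, y * ‖f' y‖ ^ 2)
      + |ξ| ^ ((2 : ℝ) / 3) * (∫ y in Icc 0 M, ‖f' y‖ ^ 2)
      + (∫ y in Icc 0 M, ‖(I * (ξ * y : ℝ)) • f y - h y‖ ^ 2)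
    ≤ 60 * ∫ y in Icc 0 M, ‖h y‖ ^ 2 := by
  simp only [rpow_ofNat_div_ofNat_eq_pow (abs_nonneg ξ)]
  set r : ℝ := |ξ| ^ (3 : ℝ)⁻¹
  have abs_eq : |ξ| = r ^ 3 := (Real.rpow_inv_natCast_pow (abs_nonneg ξ) three_ne_zero).symm
  have sq_eq : ξ ^ 2 = r ^ 6 := by rw [← sq_abs, abs_eq, ← pow_mul]
  have norm_sq (y : ℝ) : y ^ 2 * ‖f y‖ ^ 2 = ‖y • f y‖ ^ 2 := by
    rw [norm_smul, mul_pow, Real.norm_eq_abs, sq_abs]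
  obtain ⟨deriv_le, integral_le⟩ :=
    max_le_iff.1 (hs.max_airy_energy_le hM (by simp [hleft, hright]))
  obtain ⟨weighted_deriv_le, weighted_le⟩ :=
    max_le_iff.1 (hs.max_airy_weighted_energy_le hM (by simp [hleft, hright]))
  let _ : InnerProductSpace ℝ E := InnerProductSpace.rclikeToReal ℂ E
  have uncertainty := lpNorm_sq_le_two_mul_lpNorm_smul_mul_lpNorm_deriv hM hs.hasDerivWithinAt
    hs.memLp_deriv (by simp [hright])
  have deriv_deriv_le := hs.lpNorm_airy_deriv_deriv_sq_le
  rw [abs_eq] at integral_le weighted_le deriv_deriv_le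
  have total := rescaled_sum_sq_le_of_energy_inequalities (by positivity) deriv_le integral_le
    weighted_le weighted_deriv_le uncertainty deriv_deriv_le
  rw [lpNorm_two_sq (hs.memLp_smul (w := fun y ↦ y) continuousOn_id).1, lpNorm_two_sq hs.memLp.1,
    lpNorm_two_sq hs.memLp_deriv.1, lpNorm_two_sq hs.memLp_source.1,
    lpNorm_two_sq (hs.memLp_deriv_deriv (by fun_prop)).1] at total
  simpa only [norm_sq, sq_eq, abs_eq] using total

/-- Frequency-by-frequency energy estimate for the degenerate Airy-type boundary-value
problem `f'' = iξy f - h` on `[0,M]` with `f'(0) = 0`, `f(M) = 0`. -/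
theorem stmt_6 :
    ∃ C : ℝ, 0 < C ∧ ∀ (M ξ : ℝ), 0 < M → ∀ (h f : ℝ → ℂ),
      ContinuousOn h (Set.Icc 0 M) → ContDiff ℝ 2 f →
      (∀ y ∈ Set.Icc (0 : ℝ) M,
        deriv (deriv f) y = Complex.I * (ξ : ℂ) * (y : ℂ) * f y - h y) →
      deriv f 0 = 0 → f M = 0 →
      ξ ^ 2 * (∫ y in Set.Icc (0 : ℝ) M, y ^ 2 * ‖f y‖ ^ 2)
        + |ξ| ^ ((5 : ℝ) / 3) * (∫ y in Set.Icc (0 : ℝ) M, y * ‖f y‖ ^ 2)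
        + |ξ| ^ ((4 : ℝ) / 3) * (∫ y in Set.Icc (0 : ℝ) M, ‖f y‖ ^ 2)
        + |ξ| * (∫ y in Set.Icc (0 : ℝ) M, y * ‖deriv f y‖ ^ 2)
        + |ξ| ^ ((2 : ℝ) / 3) * (∫ y in Set.Icc (0 : ℝ) M, ‖deriv f y‖ ^ 2)
        + (∫ y in Set.Icc (0 : ℝ) M, ‖deriv (deriv f) y‖ ^ 2)
      ≤ C * ∫ y in Set.Icc (0 : ℝ) M, ‖h y‖ ^ 2 := by
  refine ⟨60, by norm_num, fun M ξ hM h f hh hf heq hleft hright ↦ ?_⟩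
  have deriv_deriv_eq (y : ℝ) (hy : y ∈ Icc 0 M) :
      deriv (deriv f) y = (I * (ξ * y : ℝ)) • f y - h y := by
    rw [heq y hy, smul_eq_mul, ofReal_mul, mul_assoc I]
  have solution : IsImaginaryPotentialSolution 0 M (fun y ↦ ξ * y) f (deriv f) h :=
    { hasDerivWithinAt := fun y _ ↦
        (hf.differentiable two_ne_zero y).hasDerivAt.hasDerivWithinAt
      hasDerivWithinAt_deriv := fun y hy ↦
        deriv_deriv_eq y hy ▸ (hf.differentiable_deriv_two y).hasDerivAt.hasDerivWithinAt
      memLp_source := memLp_restrict_Icc_of_continuousOn hh 2 }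
  rw [setIntegral_congr_fun measurableSet_Icc fun y hy ↦
    congrArg (‖·‖ ^ 2) (deriv_deriv_eq y hy)]
  exact stmt_6_general hM.le solution hleft hright
end

section
/- Let M > 0 and ξ ∈ ℝ, let h : [0,M] → ℂ be continuous, and let f : [0,M] → ℂ be twice continuously differentiable with f''(y) = i·ξ·y·f(y) − h(y) for all y ∈ [0,M], f'(0) = 0 and f(M) = 0. Then both ∫₀^M |f'(y)|² dy and |ξ|·∫₀^M y·|f(y)|² dy are bounded by (∫₀^M |h|²)^{1/2}·(∫₀^M |f|²)^{1/2}. -/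
/-!
Pairing the equation `f'' = V f - h` with `f` and integrating by parts turns it into the energy
identity `∫ ‖f'‖² + ∫ V ‖f‖² = ∫ ⟪f, h⟫`, up to boundary terms. For the purely imaginary potential
`V = i ξ w` the two integrals on the left are the real and imaginary parts of the right-hand side,
so each is at most its modulus, which Cauchy–Schwarz estimates.
-/

open MeasureTheory

section InnerIntegral

open Set
open scoped InnerProductSpace

lemma memLp_restrict_of_continuousOn_of_isCompact {α E : Type*} [TopologicalSpace α]
    [TopologicalSpace.PseudoMetrizableSpace α] [MeasurableSpace α] [OpensMeasurableSpace α]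
    [NormedAddCommGroup E] {μ : Measure α} [IsFiniteMeasureOnCompacts μ] {p : ENNReal} {K : Set α}
    {f : α → E} (hK : IsCompact K) (hKm : MeasurableSet K) (hf : ContinuousOn f K) :
    MemLp f p (μ.restrict K) := by
  have : IsFiniteMeasure (μ.restrict K) := isFiniteMeasure_restrict.mpr hK.measure_lt_top.ne
  obtain ⟨C, hC⟩ := hK.exists_bound_of_continuousOn hf
  exact .of_bound (hf.aestronglyMeasurable_of_isCompact hK hKm) C
    (ae_restrict_of_forall_mem hKm hC)

variable {𝕜 E : Type*} [RCLike 𝕜] [NormedAddCommGroup E] [InnerProductSpace 𝕜 E]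

lemma norm_integral_inner_le_sqrt_mul_sqrt {α : Type*} [MeasurableSpace α] {μ : Measure α}
    {f g : α → E} (hf : MemLp f 2 μ) (hg : MemLp g 2 μ) :
    ‖∫ x, ⟪f x, g x⟫_𝕜 ∂μ‖ ≤ √(∫ x, ‖f x‖ ^ 2 ∂μ) * √(∫ x, ‖g x‖ ^ 2 ∂μ) := by
  have integrable_mul : Integrable (fun x ↦ ‖f x‖ * ‖g x‖) μ := hf.norm.integrable_mul hg.norm
  calc ‖∫ x, ⟪f x, g x⟫_𝕜 ∂μ‖
      ≤ ∫ x, ‖f x‖ * ‖g x‖ ∂μ :=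
        norm_integral_le_of_norm_le integrable_mul (.of_forall fun _ ↦ norm_inner_le_norm _ _)
    _ ≤ √(∫ x, ‖f x‖ ^ 2 ∂μ) * √(∫ x, ‖g x‖ ^ 2 ∂μ) := by
        simpa only [Real.rpow_ofNat, ← Real.sqrt_eq_rpow] using
          integral_mul_norm_le_Lp_mul_Lq Real.HolderConjugate.two_two
            (by simpa using hf) (by simpa using hg)

variable [NormedSpace ℝ E] {a b : ℝ}

lemma integral_inner_deriv_add_deriv_inner_eq_sub {f f' g g' : ℝ → E} (hab : a ≤ b)
    (hf : ContinuousOn f (Icc a b)) (hg : ContinuousOn g (Icc a b))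
    (hf' : ContinuousOn f' (Icc a b)) (hg' : ContinuousOn g' (Icc a b))
    (hff' : ∀ y ∈ Ioo a b, HasDerivAt f (f' y) y) (hgg' : ∀ y ∈ Ioo a b, HasDerivAt g (g' y) y) :
    ∫ y in Icc a b, (⟪f y, g' y⟫_𝕜 + ⟪f' y, g y⟫_𝕜) = ⟪f b, g b⟫_𝕜 - ⟪f a, g a⟫_𝕜 := by
  rw [integral_Icc_eq_integral_Ioc, ← intervalIntegral.integral_of_le hab]
  exact intervalIntegral.integral_eq_sub_of_hasDerivAt_of_le hab (hf.inner hg)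
    (fun y hy ↦ (hff' y hy).inner 𝕜 (hgg' y hy))
    (((hf.inner hg').add (hf'.inner hg)).intervalIntegrable_of_Icc hab)

lemma integral_norm_sq_deriv_add_integral_mul_norm_sq {V : ℝ → 𝕜} {f f' h : ℝ → E} (hab : a ≤ b)
    (hV : ContinuousOn V (Icc a b)) (hh : ContinuousOn h (Icc a b))
    (hf : ContinuousOn f (Icc a b)) (hf' : ContinuousOn f' (Icc a b))
    (hff' : ∀ y ∈ Ioo a b, HasDerivAt f (f' y) y)
    (heq : ∀ y ∈ Ioo a b, HasDerivAt f' (V y • f y - h y) y) :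
    ((∫ y in Icc a b, ‖f' y‖ ^ 2 : ℝ) : 𝕜) + ∫ y in Icc a b, V y * ((‖f y‖ ^ 2 : ℝ) : 𝕜) =
      (∫ y in Icc a b, ⟪f y, h y⟫_𝕜) + (⟪f b, f' b⟫_𝕜 - ⟪f a, f' a⟫_𝕜) := by
  have integrable_kinetic : IntegrableOn (fun y ↦ ((‖f' y‖ ^ 2 : ℝ) : 𝕜)) (Icc a b) :=
    ContinuousOn.integrableOn_Icc (by fun_prop)
  have integrable_potential : IntegrableOn (fun y ↦ V y * ((‖f y‖ ^ 2 : ℝ) : 𝕜)) (Icc a b) :=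
    ContinuousOn.integrableOn_Icc (by fun_prop)
  have integrable_source : IntegrableOn (fun y ↦ ⟪f y, h y⟫_𝕜) (Icc a b) :=
    (hf.inner hh).integrableOn_Icc
  have by_parts : ∫ y in Icc a b, (⟪f y, V y • f y - h y⟫_𝕜 + ⟪f' y, f' y⟫_𝕜) =
      ⟪f b, f' b⟫_𝕜 - ⟪f a, f' a⟫_𝕜 :=
    integral_inner_deriv_add_deriv_inner_eq_sub hab hf hf' hf' ((hV.smul hf).sub hh) hff' heq
  rw [← by_parts, ← integral_ofReal, ← integral_add integrable_kinetic integrable_potential,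
    ← sub_eq_iff_eq_add',
    ← integral_sub (by exact integrable_kinetic.add integrable_potential) integrable_source]
  congr! 2 with y
  simp only [inner_sub_right, inner_smul_right, inner_self_eq_norm_sq_to_K, RCLike.ofReal_pow]
  ring

/-- Neumann, Dirichlet, mixed and periodic boundary conditions all satisfy `hbdry`. -/
theorem stmt_7_general {H : Type*} [NormedAddCommGroup H] [InnerProductSpace ℂ H] (hab : a ≤ b)
    (ξ : ℝ) {w : ℝ → ℝ} {f f' h : ℝ → H} (hw : ContinuousOn w (Icc a b))
    (hh : ContinuousOn h (Icc a b)) (hf : ContinuousOn f (Icc a b))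
    (hf' : ContinuousOn f' (Icc a b)) (hff' : ∀ y ∈ Ioo a b, HasDerivAt f (f' y) y)
    (heq : ∀ y ∈ Ioo a b, HasDerivAt f' ((Complex.I * ξ * w y) • f y - h y) y)
    (hbdry : ⟪f b, f' b⟫_ℂ = ⟪f a, f' a⟫_ℂ) :
    (∫ y in Icc a b, ‖f' y‖ ^ 2) ≤
        √(∫ y in Icc a b, ‖h y‖ ^ 2) * √(∫ y in Icc a b, ‖f y‖ ^ 2) ∧
      |ξ| * |∫ y in Icc a b, w y * ‖f y‖ ^ 2| ≤
        √(∫ y in Icc a b, ‖h y‖ ^ 2) * √(∫ y in Icc a b, ‖f y‖ ^ 2) := by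
  set A := ∫ y in Icc a b, ‖f' y‖ ^ 2
  set B := ∫ y in Icc a b, w y * ‖f y‖ ^ 2 with hB
  have potential :
      ∫ y in Icc a b, (Complex.I * ξ * w y) * ((‖f y‖ ^ 2 : ℝ) : ℂ) = Complex.I * ξ * B := by
    simp only [mul_assoc, ← Complex.ofReal_mul, integral_const_mul, integral_complex_ofReal, hB]
  have energy : (A : ℂ) + Complex.I * ξ * B = ∫ y in Icc a b, ⟪f y, h y⟫_ℂ := calc
    (A : ℂ) + Complex.I * ξ * B
    _ = A + ∫ y in Icc a b, (Complex.I * ξ * w y) * ((‖f y‖ ^ 2 : ℝ) : ℂ) := by rw [potential]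
    _ = (∫ y in Icc a b, ⟪f y, h y⟫_ℂ) + (⟪f b, f' b⟫_ℂ - ⟪f a, f' a⟫_ℂ) :=
      integral_norm_sq_deriv_add_integral_mul_norm_sq hab (by fun_prop) hh hf hf' hff' heq
    _ = ∫ y in Icc a b, ⟪f y, h y⟫_ℂ := by rw [hbdry, sub_self, add_zero]
  have bound : ‖(A : ℂ) + Complex.I * ξ * B‖ ≤
      √(∫ y in Icc a b, ‖h y‖ ^ 2) * √(∫ y in Icc a b, ‖f y‖ ^ 2) := by
    rw [energy, mul_comm]
    exact norm_integral_inner_le_sqrt_mul_sqrt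
      (memLp_restrict_of_continuousOn_of_isCompact isCompact_Icc measurableSet_Icc hf)
      (memLp_restrict_of_continuousOn_of_isCompact isCompact_Icc measurableSet_Icc hh)
  constructor
  · simpa using (Complex.re_le_norm _).trans bound
  · simpa [abs_mul] using (Complex.abs_im_le_norm _).trans bound

end InnerIntegral

/-- Basic energy identity consequences for `f'' = iξy f - h` on `[0,M]` with
`f'(0) = 0`, `f(M) = 0`: both `∫|f'|²` and `|ξ|∫ y|f|²` are bounded by
`(∫|h|²)^{1/2} (∫|f|²)^{1/2}`. -/
theorem stmt_7 (M ξ : ℝ) (hM : 0 < M) (h f : ℝ → ℂ)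
    (hh : ContinuousOn h (Set.Icc 0 M)) (hf : ContDiff ℝ 2 f)
    (heq : ∀ y ∈ Set.Icc (0 : ℝ) M,
      deriv (deriv f) y = Complex.I * (ξ : ℂ) * (y : ℂ) * f y - h y)
    (hf0 : deriv f 0 = 0) (hfM : f M = 0) :
    (∫ y in Set.Icc (0 : ℝ) M, ‖deriv f y‖ ^ 2) ≤
        Real.sqrt (∫ y in Set.Icc (0 : ℝ) M, ‖h y‖ ^ 2) *
          Real.sqrt (∫ y in Set.Icc (0 : ℝ) M, ‖f y‖ ^ 2) ∧
      |ξ| * (∫ y in Set.Icc (0 : ℝ) M, y * ‖f y‖ ^ 2) ≤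
        Real.sqrt (∫ y in Set.Icc (0 : ℝ) M, ‖h y‖ ^ 2) *
          Real.sqrt (∫ y in Set.Icc (0 : ℝ) M, ‖f y‖ ^ 2) := by
  have hf' : ContDiff ℝ 1 (deriv f) := hf.deriv'
  have heq' (y) (hy : y ∈ Set.Ioo 0 M) :
      HasDerivAt (deriv f) ((Complex.I * ξ * y) • f y - h y) y :=
    heq y (Set.Ioo_subset_Icc_self hy) ▸ (hf'.differentiable one_ne_zero y).hasDerivAt
  obtain ⟨kinetic, potential⟩ := stmt_7_general hM.le ξ (w := fun y ↦ y) continuousOn_id hh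
    hf.continuous.continuousOn hf'.continuous.continuousOn
    (fun y _ ↦ (hf.differentiable two_ne_zero y).hasDerivAt) heq' (by simp [hf0, hfM])
  exact ⟨kinetic, (mul_le_mul_of_nonneg_left (le_abs_self _) (abs_nonneg ξ)).trans potential⟩
end

section
/- Let M > 0 and ξ ∈ ℝ with ξ ≠ 0. If f : [0,M] → ℂ is twice continuously differentiable with f''(y) = i·ξ·y·f(y) for all y ∈ [0,M], f'(0) = 0 and f(M) = 0, then f is identically zero on [0,M]. -/
/-!
Write `g = ⟪f, f'⟫`, so that `g' = ‖f'‖² + ⟪f, f''⟫`: integrated over the interval, this is the real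
part of the energy identity. If `⟪f, f''⟫ ≥ 0`, then `g` is monotone; boundary conditions that give
`g b ≤ g a` make it constant, so that `‖f'‖² ≤ g' = 0` and `f` is constant. For `f'' = q f` with
complex values, `⟪f, f''⟫ = Re q ‖f‖²`, which vanishes for the imaginary potential `q y = iξy`.
-/

section Energy

open Set
open scoped RealInnerProductSpace

variable {E : Type*} [NormedAddCommGroup E] [InnerProductSpace ℝ E] {f f' f'' : ℝ → E}

theorem hasDerivWithinAt_inner_deriv {s : Set ℝ} {y : ℝ}
    (hf : HasDerivWithinAt f (f' y) s y) (hf' : HasDerivWithinAt f' (f'' y) s y) :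
    HasDerivWithinAt (fun x ↦ ⟪f x, f' x⟫) (‖f' y‖ ^ 2 + ⟪f y, f'' y⟫) s y := by
  simpa only [real_inner_self_eq_norm_sq, add_comm] using hf.inner ℝ hf'

theorem monotoneOn_inner_deriv {s : Set ℝ} (hs : Convex ℝ s)
    (hf : ∀ y ∈ s, HasDerivWithinAt f (f' y) s y)
    (hf' : ∀ y ∈ s, HasDerivWithinAt f' (f'' y) s y)
    (hnonneg : ∀ y ∈ s, 0 ≤ ⟪f y, f'' y⟫) :
    MonotoneOn (fun y ↦ ⟪f y, f' y⟫) s := by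
  have hg (y : ℝ) (hy : y ∈ s) := hasDerivWithinAt_inner_deriv (hf y hy) (hf' y hy)
  exact monotoneOn_of_hasDerivWithinAt_nonneg hs (fun y hy ↦ (hg y hy).continuousWithinAt)
    (fun y hy ↦ (hg y (interior_subset hy)).mono interior_subset)
    fun y hy ↦ add_nonneg (sq_nonneg _) (hnonneg y (interior_subset hy))

variable {a b : ℝ}

theorem deriv_eq_zero_of_inner_deriv_le (hab : a < b)
    (hf : ∀ y ∈ Icc a b, HasDerivWithinAt f (f' y) (Icc a b) y)
    (hf' : ∀ y ∈ Icc a b, HasDerivWithinAt f' (f'' y) (Icc a b) y)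
    (hnonneg : ∀ y ∈ Icc a b, 0 ≤ ⟪f y, f'' y⟫)
    (hboundary : ⟪f b, f' b⟫ ≤ ⟪f a, f' a⟫) :
    ∀ y ∈ Icc a b, f' y = 0 := by
  intro y hy
  have hmono := monotoneOn_inner_deriv (convex_Icc a b) hf hf' hnonneg
  have hconst : ∀ x ∈ Icc a b, ⟪f x, f' x⟫ = ⟪f a, f' a⟫ := fun x hx ↦
    le_antisymm ((hmono hx (right_mem_Icc.2 hab.le) hx.2).trans hboundary)
      (hmono (left_mem_Icc.2 hab.le) hx hx.1)
  have henergy : ‖f' y‖ ^ 2 + ⟪f y, f'' y⟫ = 0 :=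
    (uniqueDiffOn_Icc hab y hy).eq_deriv _ (hasDerivWithinAt_inner_deriv (hf y hy) (hf' y hy))
      ((hasDerivWithinAt_const y _ ⟪f a, f' a⟫).congr hconst (hconst y hy))
  have hsq : ‖f' y‖ ^ 2 = 0 :=
    le_antisymm (by linarith only [henergy, hnonneg y hy]) (sq_nonneg _)
  simpa using hsq

theorem eq_left_of_inner_deriv_le
    (hf : ∀ y ∈ Icc a b, HasDerivWithinAt f (f' y) (Icc a b) y)
    (hf' : ∀ y ∈ Icc a b, HasDerivWithinAt f' (f'' y) (Icc a b) y)
    (hnonneg : ∀ y ∈ Icc a b, 0 ≤ ⟪f y, f'' y⟫)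
    (hboundary : ⟪f b, f' b⟫ ≤ ⟪f a, f' a⟫) :
    ∀ y ∈ Icc a b, f y = f a := by
  refine constant_of_derivWithin_zero (fun y hy ↦ (hf y hy).differentiableWithinAt) fun y hy ↦ ?_
  have hab : a < b := hy.1.trans_lt hy.2
  have hy' : y ∈ Icc a b := Ico_subset_Icc_self hy
  rw [(hf y hy').derivWithin (uniqueDiffOn_Icc hab y hy')]
  exact deriv_eq_zero_of_inner_deriv_le hab hf hf' hnonneg hboundary y hy'

/- The condition at `a` covers Neumann, Dirichlet, and Robin conditions `f' a = c • f a` with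
`0 ≤ c`. -/
theorem stmt_9_general
    (hf : ∀ y ∈ Icc a b, HasDerivWithinAt f (f' y) (Icc a b) y)
    (hf' : ∀ y ∈ Icc a b, HasDerivWithinAt f' (f'' y) (Icc a b) y)
    (hnonneg : ∀ y ∈ Icc a b, 0 ≤ ⟪f y, f'' y⟫)
    (ha : 0 ≤ ⟪f a, f' a⟫) (hb : f b = 0) :
    ∀ y ∈ Icc a b, f y = 0 := by
  intro y hy
  have hconst := eq_left_of_inner_deriv_le hf hf' hnonneg (by simpa [hb] using ha)
  rw [hconst y hy, ← hconst b (right_mem_Icc.2 (hy.1.trans hy.2)), hb]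

theorem real_inner_complex_mul_self (q z : ℂ) : ⟪z, q * z⟫ = q.re * ‖z‖ ^ 2 := by
  rw [Complex.inner, mul_assoc, Complex.mul_conj, Complex.re_mul_ofReal, Complex.normSq_eq_norm_sq]

end Energy

/-- Uniqueness for the frequency-reduced degenerate boundary-value problem: if `ξ ≠ 0`
and `f'' = iξy f` on `[0,M]` with `f'(0) = 0` and `f(M) = 0`, then `f ≡ 0` on `[0,M]`. -/
theorem stmt_9 (M ξ : ℝ) (hM : 0 < M) (hξ : ξ ≠ 0) (f : ℝ → ℂ)
    (hf : ContDiff ℝ 2 f)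
    (heq : ∀ y ∈ Set.Icc (0 : ℝ) M,
      deriv (deriv f) y = Complex.I * (ξ : ℂ) * (y : ℂ) * f y)
    (hf0 : deriv f 0 = 0) (hfM : f M = 0) :
    ∀ y ∈ Set.Icc (0 : ℝ) M, f y = 0 := by
  refine stmt_9_general
    (fun y _ ↦ (hf.differentiable two_ne_zero y).hasDerivAt.hasDerivWithinAt)
    (fun y _ ↦ (hf.differentiable_deriv_two y).hasDerivAt.hasDerivWithinAt)
    (fun y hy ↦ ?_) (by simp [hf0]) hfM
  have hre : (Complex.I * ξ * y).re = 0 := by simp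
  rw [heq y hy, real_inner_complex_mul_self, hre, zero_mul]
end

section
/- Let M > 0 and ξ ∈ ℝ. For every continuous function h : [0,M] → ℂ there exists a twice continuously differentiable function f : [0,M] → ℂ satisfying f''(y) = i·ξ·y·f(y) − h(y) for all y ∈ [0,M], f'(0) = 0 and f(M) = 0. -/
/-!
Shooting: the problem is linear, so the solution with prescribed `f'(a)` and `f(b)` is a particular
solution of the initial value problem at `a`, corrected by a multiple of the homogeneous solution
`φ` with `φ(a) = 1`, `φ'(a) = 0`. This requires `φ(b) ≠ 0`, and that is where the sign of the
coefficient enters: if `φ'' = q φ` with `Re q ≥ 0`, then `(|φ|²)'' = 2|φ'|² + 2 Re q |φ|² ≥ 0`, so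
`|φ|²` is nondecreasing and `|φ(b)| ≥ 1`. For `q = iξy` the real part vanishes.

The initial value problem is solved on the whole interval at once: in its twice integrated form it
is a fixed point equation for a Volterra operator, whose iterates have Lipschitz constants
`(K(b - a))ⁿ / n! → 0`.
-/

open Set Function intervalIntegral
open scoped NNReal InnerProductSpace

section Volterra

open scoped Nat

variable {E : Type*} [MetricSpace E] {a b : ℝ} {hab : a ≤ b} {K : ℝ≥0}
  {T : C(Icc a b, E) → C(Icc a b, E)}

lemma dist_iterate_apply_le_of_volterra
    (hT : ∀ u v (t : Icc a b), dist (T u t) (T v t) ≤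
      K * ∫ s in a..t, dist (IccExtend hab u s) (IccExtend hab v s))
    (u v : C(Icc a b, E)) (n : ℕ) (t : Icc a b) :
    dist (T^[n] u t) (T^[n] v t) ≤ (K * (t - a)) ^ n / n ! * dist u v := by
  induction n generalizing t with
  | zero => simpa using ContinuousMap.dist_apply_le_dist t
  | succ n ih =>
    have ih_extend : ∀ s ∈ Icc a (t : ℝ),
        dist (IccExtend hab (T^[n] u) s) (IccExtend hab (T^[n] v) s) ≤
          (K * (s - a)) ^ n / n ! * dist u v := fun s hs ↦ by
      have hs' : s ∈ Icc a b := ⟨hs.1, hs.2.trans t.2.2⟩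
      simpa only [IccExtend_of_mem _ _ hs'] using ih ⟨s, hs'⟩
    rw [iterate_succ_apply', iterate_succ_apply']
    calc dist (T (T^[n] u) t) (T (T^[n] v) t)
        ≤ K * ∫ s in a..t, dist (IccExtend hab (T^[n] u) s) (IccExtend hab (T^[n] v) s) :=
          hT _ _ t
      _ ≤ K * ∫ s in a..t, (K * (s - a)) ^ n / n ! * dist u v := by
          gcongr
          refine integral_mono_on t.2.1 (Continuous.intervalIntegrable ?_ _ _)
            (Continuous.intervalIntegrable (by fun_prop) _ _) ih_extend
          exact (T^[n] u).continuous.Icc_extend'.dist (T^[n] v).continuous.Icc_extend'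
      _ = (K * (t - a)) ^ (n + 1) / (n + 1)! * dist u v := by
          simp only [mul_pow, integral_mul_const, integral_div, integral_const_mul,
            integral_comp_sub_right fun s ↦ s ^ n, sub_self, integral_pow, Nat.factorial_succ]
          push_cast
          field_simp
          ring

theorem exists_isFixedPt_of_volterra [CompleteSpace E] [Nonempty E]
    (hT : ∀ u v (t : Icc a b), dist (T u t) (T v t) ≤
      K * ∫ s in a..t, dist (IccExtend hab u s) (IccExtend hab v s)) :
    ∃ u, IsFixedPt T u := by
  obtain ⟨n, hn⟩ := FloorSemiring.tendsto_pow_div_factorial_atTop (K * (b - a))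
    |>.eventually (gt_mem_nhds zero_lt_one) |>.exists
  have hconst : 0 ≤ (K * (b - a)) ^ n / n ! := by
    have : 0 ≤ b - a := sub_nonneg.2 hab
    positivity
  have hT_dist (u v : C(Icc a b, E)) :
      dist (T^[n] u) (T^[n] v) ≤ (K * (b - a)) ^ n / n ! * dist u v := by
    refine (ContinuousMap.dist_le (by positivity)).2 fun t ↦ ?_
    have ht : 0 ≤ (t : ℝ) - a := sub_nonneg.2 t.2.1
    refine (dist_iterate_apply_le_of_volterra hT u v n t).trans ?_
    gcongr
    exact t.2.2
  have hT_contracting : ContractingWith ⟨_, hconst⟩ T^[n] :=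
    ⟨hn, LipschitzWith.of_dist_le_mul hT_dist⟩
  inhabit E
  exact ⟨_, hT_contracting.isFixedPt_fixedPoint_iterate⟩

end Volterra

section InitialValue

variable {E : Type*} [NormedAddCommGroup E] [NormedSpace ℝ E] {a b : ℝ} {x₀ v₀ : E}
  {g g₁ g₂ : ℝ → E}

/-- The second primitive of `g` with value `x₀` and derivative `v₀` at `a`: the integrated form of
the initial value problem `f'' = g`, `f(a) = x₀`, `f'(a) = v₀`. -/
noncomputable def secondPrimitive (a : ℝ) (x₀ v₀ : E) (g : ℝ → E) (t : ℝ) : E :=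
  x₀ + ∫ s in a..t, (v₀ + ∫ r in a..s, g r)

@[simp]
lemma secondPrimitive_self : secondPrimitive a x₀ v₀ g a = x₀ := by
  simp [secondPrimitive]

lemma norm_secondPrimitive_sub_le (hg₁ : Continuous g₁) (hg₂ : Continuous g₂) {d : ℝ → ℝ}
    (hd : Continuous d) (hgd : ∀ s, ‖g₁ s - g₂ s‖ ≤ d s) {t : ℝ} (hat : a ≤ t) :
    ‖secondPrimitive a x₀ v₀ g₁ t - secondPrimitive a x₀ v₀ g₂ t‖ ≤
      (t - a) * ∫ s in a..t, d s := by
  have hprim {g : ℝ → E} (hg : Continuous g) : Continuous fun s ↦ v₀ + ∫ r in a..s, g r :=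
    continuous_const.add (continuous_primitive hg.intervalIntegrable a)
  have hdiff : secondPrimitive a x₀ v₀ g₁ t - secondPrimitive a x₀ v₀ g₂ t =
      ∫ s in a..t, ∫ r in a..s, (g₁ r - g₂ r) := by
    simp only [secondPrimitive, add_sub_add_left_eq_sub]
    rw [← integral_sub ((hprim hg₁).intervalIntegrable _ _) ((hprim hg₂).intervalIntegrable _ _)]
    simp only [add_sub_add_left_eq_sub,
      integral_sub (hg₁.intervalIntegrable _ _) (hg₂.intervalIntegrable _ _)]
  have hinner : ∀ s ∈ uIoc a t, ‖∫ r in a..s, (g₁ r - g₂ r)‖ ≤ ∫ r in a..t, d r := by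
    intro s hs
    rw [uIoc_of_le hat] at hs
    calc ‖∫ r in a..s, (g₁ r - g₂ r)‖
        ≤ ∫ r in a..s, d r := norm_integral_le_of_norm_le hs.1.le
          (Filter.Eventually.of_forall fun r _ ↦ hgd r) (hd.intervalIntegrable _ _)
      _ ≤ ∫ r in a..t, d r := integral_mono_interval le_rfl hs.1.le hs.2
          (Filter.Eventually.of_forall fun r ↦ (norm_nonneg _).trans (hgd r))
          (hd.intervalIntegrable _ _)
  rw [hdiff, mul_comm]
  simpa only [abs_of_nonneg (sub_nonneg.2 hat)] using norm_integral_le_of_norm_le_const hinner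

variable [CompleteSpace E]

lemma hasDerivAt_const_add_integral (hg : Continuous g) (t : ℝ) :
    HasDerivAt (fun t ↦ v₀ + ∫ s in a..t, g s) (g t) t :=
  (hg.integral_hasStrictDerivAt a t).hasDerivAt.const_add v₀

lemma hasDerivAt_secondPrimitive (hg : Continuous g) (t : ℝ) :
    HasDerivAt (secondPrimitive a x₀ v₀ g) (v₀ + ∫ s in a..t, g s) t :=
  hasDerivAt_const_add_integral
    (continuous_const.add (continuous_primitive hg.intervalIntegrable a)) t

lemma deriv_secondPrimitive (hg : Continuous g) :
    deriv (secondPrimitive a x₀ v₀ g) = fun t ↦ v₀ + ∫ s in a..t, g s :=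
  funext fun t ↦ (hasDerivAt_secondPrimitive hg t).deriv

lemma deriv_deriv_secondPrimitive (hg : Continuous g) :
    deriv (deriv (secondPrimitive a x₀ v₀ g)) = g := by
  rw [deriv_secondPrimitive hg]
  exact funext fun t ↦ (hasDerivAt_const_add_integral hg t).deriv

lemma contDiff_two_secondPrimitive (hg : Continuous g) :
    ContDiff ℝ 2 (secondPrimitive a x₀ v₀ g) := by
  rw [← one_add_one_eq_two, contDiff_succ_iff_deriv, contDiff_one_iff_deriv,
    deriv_deriv_secondPrimitive hg, deriv_secondPrimitive hg]
  exact ⟨fun t ↦ (hasDerivAt_secondPrimitive hg t).differentiableAt, by simp,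
    fun t ↦ (hasDerivAt_const_add_integral hg t).differentiableAt, hg⟩

theorem exists_contDiff_two_deriv_deriv_eq (hab : a ≤ b) {F : ℝ → E → E} {K : ℝ≥0}
    (hF_cont : ContinuousOn (uncurry F) (Icc a b ×ˢ univ))
    (hF_lip : ∀ t ∈ Icc a b, LipschitzWith K (F t)) (x₀ v₀ : E) :
    ∃ f : ℝ → E, ContDiff ℝ 2 f ∧ (∀ t ∈ Icc a b, deriv (deriv f) t = F t (f t)) ∧
      f a = x₀ ∧ deriv f a = v₀ := by
  let G (u : C(Icc a b, E)) : ℝ → E := IccExtend hab fun t ↦ F t (u t)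
  have hG (u : C(Icc a b, E)) : Continuous (G u) :=
    Continuous.Icc_extend' <| hF_cont.comp_continuous
      (continuous_subtype_val.prodMk u.continuous) fun t ↦ ⟨t.2, mem_univ _⟩
  let T (u : C(Icc a b, E)) : C(Icc a b, E) :=
    ⟨fun t ↦ secondPrimitive a x₀ v₀ (G u) t,
      (contDiff_two_secondPrimitive (hG u)).continuous.comp continuous_subtype_val⟩
  have hG_dist (u v : C(Icc a b, E)) (s : ℝ) :
      ‖G u s - G v s‖ ≤ K * dist (IccExtend hab u s) (IccExtend hab v s) := by
    rw [← dist_eq_norm]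
    exact (hF_lip _ (projIcc a b hab s).2).dist_le_mul _ _
  have hT : ∀ u v (t : Icc a b), dist (T u t) (T v t) ≤
      ((b - a).toNNReal * K : ℝ≥0) *
        ∫ s in a..t, dist (IccExtend hab u s) (IccExtend hab v s) := fun u v t ↦ by
    have hdist : Continuous fun s ↦ dist (IccExtend hab u s) (IccExtend hab v s) :=
      u.continuous.Icc_extend'.dist v.continuous.Icc_extend'
    rw [NNReal.coe_mul, Real.coe_toNNReal _ (sub_nonneg.2 hab), mul_assoc, ← integral_const_mul,
      dist_eq_norm]
    refine (norm_secondPrimitive_sub_le (hG u) (hG v) (hdist.const_mul _) (hG_dist u v)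
      t.2.1).trans ?_
    have hint : 0 ≤ ∫ s in a..t, K * dist (IccExtend hab u s) (IccExtend hab v s) :=
      integral_nonneg t.2.1 fun _ _ ↦ by positivity
    gcongr
    exact t.2.2
  obtain ⟨u, hu⟩ := exists_isFixedPt_of_volterra hT
  refine ⟨secondPrimitive a x₀ v₀ (G u), contDiff_two_secondPrimitive (hG u), fun t ht ↦ ?_,
    secondPrimitive_self, by simp [deriv_secondPrimitive (hG u)]⟩
  have hut : u ⟨t, ht⟩ = secondPrimitive a x₀ v₀ (G u) t := (DFunLike.congr_fun hu ⟨t, ht⟩).symm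
  rw [deriv_deriv_secondPrimitive (hG u), ← hut]
  exact IccExtend_of_mem hab _ ht

end InitialValue

section Linear

variable {E : Type*} [NormedAddCommGroup E] [NormedSpace ℂ E] {a b : ℝ}

theorem exists_contDiff_two_deriv_deriv_eq_smul_sub [CompleteSpace E] (hab : a ≤ b)
    {q : ℝ → ℂ} {h : ℝ → E} (hq : ContinuousOn q (Icc a b)) (hh : ContinuousOn h (Icc a b))
    (x₀ v₀ : E) :
    ∃ f : ℝ → E, ContDiff ℝ 2 f ∧ (∀ t ∈ Icc a b, deriv (deriv f) t = q t • f t - h t) ∧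
      f a = x₀ ∧ deriv f a = v₀ := by
  obtain ⟨C, hC⟩ := isCompact_Icc.exists_bound_of_continuousOn hq
  have hfst : MapsTo Prod.fst (Icc a b ×ˢ (univ : Set E)) (Icc a b) := fun _ hp ↦ hp.1
  refine exists_contDiff_two_deriv_deriv_eq hab (F := fun t x ↦ q t • x - h t) (K := C.toNNReal)
    (((hq.comp continuousOn_fst hfst).smul continuousOn_snd).sub (hh.comp continuousOn_fst hfst))
    (fun t ht ↦ LipschitzWith.of_dist_le_mul fun x y ↦ ?_) x₀ v₀
  rw [dist_sub_right, dist_smul₀]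
  gcongr
  exact (hC t ht).trans (Real.le_coe_toNNReal C)

lemma deriv_add_smul_const {p : ℝ → E} {φ : ℝ → ℂ} (hp : Differentiable ℝ p)
    (hφ : Differentiable ℝ φ) (c : E) :
    deriv (fun t ↦ p t + φ t • c) = fun t ↦ deriv p t + deriv φ t • c := by
  ext t
  exact ((hp t).hasDerivAt.add ((hφ t).hasDerivAt.smul_const c)).deriv

end Linear

section Monotone

variable {H : Type*} [NormedAddCommGroup H] [InnerProductSpace ℝ H] {a b : ℝ}

theorem monotoneOn_norm_of_inner_deriv_deriv_nonneg {f : ℝ → H} (hf : ContDiff ℝ 2 f)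
    (hf_inner : ∀ t ∈ Icc a b, 0 ≤ ⟪f t, deriv (deriv f) t⟫_ℝ) (ha : 0 ≤ ⟪f a, deriv f a⟫_ℝ) :
    MonotoneOn (fun t ↦ ‖f t‖) (Icc a b) := by
  have hf' (t : ℝ) : HasDerivAt f (deriv f t) t := (hf.differentiable two_ne_zero t).hasDerivAt
  have hf'' (t : ℝ) : HasDerivAt (deriv f) (deriv (deriv f) t) t :=
    (hf.differentiable_deriv_two t).hasDerivAt
  have hinner_mono : MonotoneOn (fun t ↦ ⟪f t, deriv f t⟫_ℝ) (Icc a b) := by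
    have hderiv (t : ℝ) := (hf' t).inner ℝ (hf'' t)
    refine monotoneOn_of_deriv_nonneg (convex_Icc a b)
      (fun t _ ↦ (hderiv t).continuousAt.continuousWithinAt)
      (fun t _ ↦ (hderiv t).differentiableAt.differentiableWithinAt) fun t ht ↦ ?_
    rw [(hderiv t).deriv]
    exact add_nonneg (hf_inner t (interior_subset ht)) real_inner_self_nonneg
  have hinner_nonneg : ∀ t ∈ Icc a b, 0 ≤ ⟪f t, deriv f t⟫_ℝ := fun t ht ↦
    ha.trans (hinner_mono (left_mem_Icc.2 (ht.1.trans ht.2)) ht ht.1)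
  have hsq_mono : MonotoneOn (fun t ↦ ‖f t‖ ^ 2) (Icc a b) := by
    have hderiv (t : ℝ) := (hf' t).norm_sq
    refine monotoneOn_of_deriv_nonneg (convex_Icc a b)
      (fun t _ ↦ (hderiv t).continuousAt.continuousWithinAt)
      (fun t _ ↦ (hderiv t).differentiableAt.differentiableWithinAt) fun t ht ↦ ?_
    rw [(hderiv t).deriv]
    exact mul_nonneg zero_le_two (hinner_nonneg t (interior_subset ht))
  exact fun s hs t ht hst ↦ le_of_sq_le_sq (hsq_mono hs ht hst) (norm_nonneg _)

lemma norm_le_norm_of_deriv_deriv_eq_mul {q φ : ℝ → ℂ} (hab : a ≤ b) (hφ : ContDiff ℝ 2 φ)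
    (hq_re : ∀ t ∈ Icc a b, 0 ≤ (q t).re)
    (hφ_eq : ∀ t ∈ Icc a b, deriv (deriv φ) t = q t * φ t) (ha : deriv φ a = 0) :
    ‖φ a‖ ≤ ‖φ b‖ := by
  refine monotoneOn_norm_of_inner_deriv_deriv_nonneg hφ (fun t ht ↦ ?_) (by simp [ha])
    (left_mem_Icc.2 hab) (right_mem_Icc.2 hab) hab
  have hinner : ⟪φ t, q t * φ t⟫_ℝ = (q t).re * Complex.normSq (φ t) := by
    rw [Complex.inner, mul_assoc, Complex.mul_conj, Complex.re_mul_ofReal]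
  rw [hφ_eq t ht, hinner]
  exact mul_nonneg (hq_re t ht) (Complex.normSq_nonneg _)

end Monotone

theorem stmt_10_general {E : Type*} [NormedAddCommGroup E] [NormedSpace ℂ E] [CompleteSpace E]
    {a b : ℝ} (hab : a ≤ b) {q : ℝ → ℂ} (hq : ContinuousOn q (Icc a b))
    (hq_re : ∀ t ∈ Icc a b, 0 ≤ (q t).re) {h : ℝ → E} (hh : ContinuousOn h (Icc a b))
    (v₀ x₁ : E) :
    ∃ f : ℝ → E, ContDiff ℝ 2 f ∧ (∀ t ∈ Icc a b, deriv (deriv f) t = q t • f t - h t) ∧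
      deriv f a = v₀ ∧ f b = x₁ := by
  obtain ⟨p, hp, hp_eq, -, hp'⟩ := exists_contDiff_two_deriv_deriv_eq_smul_sub hab hq hh 0 v₀
  obtain ⟨φ, hφ, hφ_eq, hφa, hφ'⟩ := exists_contDiff_two_deriv_deriv_eq_smul_sub hab hq
    (continuousOn_const (c := (0 : ℂ))) 1 0
  simp only [smul_eq_mul, sub_zero] at hφ_eq
  have hφb : φ b ≠ 0 := by
    have := norm_le_norm_of_deriv_deriv_eq_mul hab hφ hq_re hφ_eq hφ'
    rw [hφa, norm_one] at this
    exact norm_pos_iff.1 (one_pos.trans_le this)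
  let c : E := (φ b)⁻¹ • (x₁ - p b)
  have hderiv := deriv_add_smul_const (hp.differentiable two_ne_zero)
    (hφ.differentiable two_ne_zero) c
  refine ⟨fun t ↦ p t + φ t • c, hp.add (hφ.smul contDiff_const), fun t ht ↦ ?_, ?_, ?_⟩
  · rw [hderiv, deriv_add_smul_const hp.differentiable_deriv_two hφ.differentiable_deriv_two]
    simp only [hp_eq t ht, hφ_eq t ht, mul_smul, smul_add]
    abel
  · simp [hderiv, hp', hφ']
  · simp [c, smul_inv_smul₀ hφb]

/-- Existence for the frequency-reduced degenerate boundary-value problem: for every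
continuous `h` on `[0,M]` there is a twice continuously differentiable `f` with
`f'' = iξy f - h` on `[0,M]`, `f'(0) = 0` and `f(M) = 0`. -/
theorem stmt_10 (M ξ : ℝ) (hM : 0 < M) (h : ℝ → ℂ)
    (hh : ContinuousOn h (Set.Icc 0 M)) :
    ∃ f : ℝ → ℂ, ContDiff ℝ 2 f ∧
      (∀ y ∈ Set.Icc (0 : ℝ) M,
        deriv (deriv f) y = Complex.I * (ξ : ℂ) * (y : ℂ) * f y - h y) ∧
      deriv f 0 = 0 ∧ f M = 0 :=
  stmt_10_general hM.le (q := fun y ↦ Complex.I * ξ * y) (by fun_prop) (by simp) hh 0 0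
end

section
/- There exists a universal constant C > 0 such that for every M > 0, every ξ ∈ ℝ with ξ ≠ 0, and every measurable g : (0,M) → ℂ with ∫₀^M |g|² < ∞ and ∫₀^M y²|g(y)|² dy < ∞, one has |ξ|^{5/6}·|∫₀^M g(y) dy| ≤ C·( |ξ|^{2/3}·(∫₀^M |g(y)|² dy)^{1/2} + |ξ|·(∫₀^M y²|g(y)|² dy)^{1/2} ). -/
open MeasureTheory

/-!
Cauchy–Schwarz against the weight `1 + (s y)²`, whose reciprocal has total mass `π / s` on the
line, bounds `√s ∫ |g|` by `√π ((∫ |g|²)^{1/2} + s (∫ y² |g|²)^{1/2})`. The scale `s = |ξ|^{1/3}`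
makes the ratio of the two terms equal to the ratio `|ξ| / |ξ|^{2/3}` of the prescribed
coefficients, and the powers match because `|ξ|^{2/3} √s = |ξ|^{5/6}`.
-/

section WeightedCauchySchwarz

variable {α E : Type*} [MeasurableSpace α] {μ : Measure α} [NormedAddCommGroup E]
  {w : α → ℝ} {g : α → E}

theorem memLp_two_sqrt {f : α → ℝ} (hf : Integrable f μ) : MemLp (fun x => √(f x)) 2 μ := by
  rw [memLp_two_iff_integrable_sq hf.aemeasurable.sqrt.aestronglyMeasurable]
  simpa only [Real.sq_sqrt'] using hf.pos_part

theorem integral_sqrt_mul_sqrt_le {a b : α → ℝ} (ha : 0 ≤ᵐ[μ] a) (hb : 0 ≤ᵐ[μ] b)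
    (hai : Integrable a μ) (hbi : Integrable b μ) :
    ∫ x, √(a x) * √(b x) ∂μ ≤ √(∫ x, a x ∂μ) * √(∫ x, b x ∂μ) := by
  have sq_sqrt_ae {c : α → ℝ} (hc : 0 ≤ᵐ[μ] c) : (fun x => √(c x) ^ 2) =ᵐ[μ] c :=
    hc.mono fun _ => Real.sq_sqrt
  have holder := integral_mul_le_Lp_mul_Lq_of_nonneg (μ := μ) Real.HolderConjugate.two_two
    (.of_forall fun x => Real.sqrt_nonneg (a x)) (.of_forall fun x => Real.sqrt_nonneg (b x))
    (by simpa only [ENNReal.ofReal_ofNat] using memLp_two_sqrt hai)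
    (by simpa only [ENNReal.ofReal_ofNat] using memLp_two_sqrt hbi)
  simpa only [Real.rpow_two, ← Real.sqrt_eq_rpow, integral_congr_ae (sq_sqrt_ae ha),
    integral_congr_ae (sq_sqrt_ae hb)] using holder

theorem sqrt_inv_mul_sqrt_mul_sq {c t : ℝ} (hc : 0 < c) (ht : 0 ≤ t) :
    √c⁻¹ * √(c * t ^ 2) = t := by
  rw [← Real.sqrt_mul (inv_nonneg.2 hc.le), inv_mul_cancel_left₀ hc.ne', Real.sqrt_sq ht]

theorem integrable_norm_of_integrable_weight_mul_sq (hw : ∀ᵐ x ∂μ, 0 < w x)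
    (hwi : Integrable (fun x => (w x)⁻¹) μ) (hwg : Integrable (fun x => w x * ‖g x‖ ^ 2) μ) :
    Integrable (fun x => ‖g x‖) μ :=
  ((memLp_two_sqrt hwi).integrable_mul (memLp_two_sqrt hwg)).congr <|
    hw.mono fun x hx => sqrt_inv_mul_sqrt_mul_sq hx (norm_nonneg (g x))

theorem integral_norm_le_sqrt_integral_weight (hw : ∀ᵐ x ∂μ, 0 < w x)
    (hwi : Integrable (fun x => (w x)⁻¹) μ) (hwg : Integrable (fun x => w x * ‖g x‖ ^ 2) μ) :
    ∫ x, ‖g x‖ ∂μ ≤ √(∫ x, (w x)⁻¹ ∂μ) * √(∫ x, w x * ‖g x‖ ^ 2 ∂μ) :=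
  calc ∫ x, ‖g x‖ ∂μ
      = ∫ x, √(w x)⁻¹ * √(w x * ‖g x‖ ^ 2) ∂μ :=
        integral_congr_ae <| hw.mono fun x hx =>
          (sqrt_inv_mul_sqrt_mul_sq hx (norm_nonneg (g x))).symm
    _ ≤ _ := integral_sqrt_mul_sqrt_le (hw.mono fun _ hx => (inv_pos.2 hx).le)
        (hw.mono fun _ hx => mul_nonneg hx.le (sq_nonneg _)) hwi hwg

end WeightedCauchySchwarz

theorem integrable_inv_one_add_mul_sq {s : ℝ} (hs : s ≠ 0) :
    Integrable fun y : ℝ => (1 + (s * y) ^ 2)⁻¹ :=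
  integrable_inv_one_add_sq.comp_mul_left' hs

theorem setIntegral_inv_one_add_mul_sq_le {s : ℝ} (hs : s ≠ 0) (S : Set ℝ) :
    ∫ y in S, (1 + (s * y) ^ 2)⁻¹ ≤ Real.pi / |s| :=
  calc ∫ y in S, (1 + (s * y) ^ 2)⁻¹
      ≤ ∫ y : ℝ, (1 + (s * y) ^ 2)⁻¹ :=
        setIntegral_le_integral (integrable_inv_one_add_mul_sq hs) <|
          .of_forall fun y => inv_nonneg.2 (by positivity)
    _ = Real.pi / |s| := by
        rw [Measure.integral_comp_mul_left (fun y : ℝ => (1 + y ^ 2)⁻¹),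
          integral_univ_inv_one_add_sq, abs_inv, smul_eq_mul, inv_mul_eq_div]

section TraceEstimate

variable {E : Type*} [NormedAddCommGroup E] {g : ℝ → E}

theorem integrable_one_add_mul_sq_mul_norm_sq {μ : Measure ℝ} (s : ℝ)
    (hg : Integrable (fun y => ‖g y‖ ^ 2) μ) (hyg : Integrable (fun y => y ^ 2 * ‖g y‖ ^ 2) μ) :
    Integrable (fun y => (1 + (s * y) ^ 2) * ‖g y‖ ^ 2) μ := by
  simpa only [add_mul, one_mul, mul_pow, mul_assoc] using hg.fun_add (hyg.const_mul (s ^ 2))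

theorem sqrt_integral_one_add_mul_sq_mul_norm_sq_le {μ : Measure ℝ} (s : ℝ)
    (hg : Integrable (fun y => ‖g y‖ ^ 2) μ) (hyg : Integrable (fun y => y ^ 2 * ‖g y‖ ^ 2) μ) :
    √(∫ y, (1 + (s * y) ^ 2) * ‖g y‖ ^ 2 ∂μ) ≤
      √(∫ y, ‖g y‖ ^ 2 ∂μ) + |s| * √(∫ y, y ^ 2 * ‖g y‖ ^ 2 ∂μ) := by
  have integral_split : ∫ y, (1 + (s * y) ^ 2) * ‖g y‖ ^ 2 ∂μ =
      ∫ y, ‖g y‖ ^ 2 ∂μ + s ^ 2 * ∫ y, y ^ 2 * ‖g y‖ ^ 2 ∂μ := by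
    simp only [add_mul, one_mul, mul_pow, mul_assoc]
    rw [integral_add hg (hyg.const_mul _), integral_const_mul]
  rw [integral_split, ← Real.sqrt_sq_eq_abs, ← Real.sqrt_mul (sq_nonneg s)]
  simpa only [Real.sqrt_eq_rpow] using
    Real.rpow_add_le_add_rpow (by positivity) (by positivity) one_half_pos.le one_half_lt_one.le

theorem sqrt_mul_setIntegral_norm_le {S : Set ℝ} {s : ℝ} (hs : 0 < s)
    (hg : IntegrableOn (fun y => ‖g y‖ ^ 2) S)
    (hyg : IntegrableOn (fun y => y ^ 2 * ‖g y‖ ^ 2) S) :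
    √s * ∫ y in S, ‖g y‖ ≤
      √Real.pi * (√(∫ y in S, ‖g y‖ ^ 2) + s * √(∫ y in S, y ^ 2 * ‖g y‖ ^ 2)) := by
  have weight_pos : ∀ᵐ y ∂volume.restrict S, 0 < 1 + (s * y) ^ 2 :=
    .of_forall fun y => by positivity
  have cauchy_schwarz := integral_norm_le_sqrt_integral_weight weight_pos
    (integrable_inv_one_add_mul_sq hs.ne').integrableOn
    (integrable_one_add_mul_sq_mul_norm_sq s hg hyg)
  have weight_mass := setIntegral_inv_one_add_mul_sq_le hs.ne' S
  have weighted_norm := sqrt_integral_one_add_mul_sq_mul_norm_sq_le s hg hyg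
  rw [abs_of_pos hs] at weight_mass weighted_norm
  calc √s * ∫ y in S, ‖g y‖
      ≤ √s * (√(Real.pi / s) * (√(∫ y in S, ‖g y‖ ^ 2) +
          s * √(∫ y in S, y ^ 2 * ‖g y‖ ^ 2))) := by
        grw [cauchy_schwarz, weight_mass, weighted_norm]
    _ = _ := by
        rw [← mul_assoc, ← Real.sqrt_mul hs.le, mul_div_cancel₀ _ hs.ne']

theorem stmt_12_general (ξ : ℝ) {S : Set ℝ} (hg : IntegrableOn (fun y => ‖g y‖ ^ 2) S)
    (hyg : IntegrableOn (fun y => y ^ 2 * ‖g y‖ ^ 2) S) :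
    IntegrableOn (fun y => ‖g y‖) S ∧
      |ξ| ^ ((5 : ℝ) / 6) * ∫ y in S, ‖g y‖ ≤
        √Real.pi * (|ξ| ^ ((2 : ℝ) / 3) * √(∫ y in S, ‖g y‖ ^ 2)
          + |ξ| * √(∫ y in S, y ^ 2 * ‖g y‖ ^ 2)) := by
  refine ⟨integrable_norm_of_integrable_weight_mul_sq (.of_forall fun y => by positivity)
    (integrable_inv_one_add_mul_sq one_ne_zero).integrableOn
    (integrable_one_add_mul_sq_mul_norm_sq 1 hg hyg), ?_⟩
  rcases eq_or_ne ξ 0 with rfl | hξ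
  · norm_num
  have hξ_pos : 0 < |ξ| := abs_pos.2 hξ
  have rpow_five_sixths :
      |ξ| ^ ((5 : ℝ) / 6) = |ξ| ^ ((2 : ℝ) / 3) * √(|ξ| ^ ((1 : ℝ) / 3)) := by
    rw [Real.sqrt_eq_rpow, ← Real.rpow_mul hξ_pos.le, ← Real.rpow_add hξ_pos]
    norm_num
  have rpow_one : |ξ| ^ ((2 : ℝ) / 3) * |ξ| ^ ((1 : ℝ) / 3) = |ξ| := by
    rw [← Real.rpow_add hξ_pos]
    norm_num
  rw [rpow_five_sixths, mul_assoc]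
  grw [sqrt_mul_setIntegral_norm_le (Real.rpow_pos_of_pos hξ_pos _) hg hyg]
  rw [mul_left_comm, mul_add, ← mul_assoc _ (|ξ| ^ ((1 : ℝ) / 3)), rpow_one]

end TraceEstimate

/-- Frequency-by-frequency form of the trace estimate: there is a universal `C > 0` such
that for all `M > 0`, `ξ ≠ 0` and `g ∈ L²(0,M)` with `y·g ∈ L²(0,M)`,
`|ξ|^{5/6} |∫₀^M g| ≤ C (|ξ|^{2/3} (∫|g|²)^{1/2} + |ξ| (∫ y²|g|²)^{1/2})`. -/
theorem stmt_12 :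
    ∃ C : ℝ, 0 < C ∧ ∀ (M ξ : ℝ), 0 < M → ξ ≠ 0 → ∀ g : ℝ → ℂ, Measurable g →
      IntegrableOn (fun y => ‖g y‖ ^ 2) (Set.Ioc 0 M) →
      IntegrableOn (fun y => y ^ 2 * ‖g y‖ ^ 2) (Set.Ioc 0 M) →
      |ξ| ^ ((5 : ℝ) / 6) * ‖∫ y in Set.Ioc (0 : ℝ) M, g y‖ ≤
        C * (|ξ| ^ ((2 : ℝ) / 3) *
              Real.sqrt (∫ y in Set.Ioc (0 : ℝ) M, ‖g y‖ ^ 2)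
            + |ξ| * Real.sqrt (∫ y in Set.Ioc (0 : ℝ) M, y ^ 2 * ‖g y‖ ^ 2)) := by
  exact ⟨√Real.pi, Real.sqrt_pos.2 Real.pi_pos, fun M ξ _ _ g _ hg hyg =>
    (mul_le_mul_of_nonneg_left (norm_integral_le_integral_norm g) (by positivity)).trans
      (stmt_12_general ξ hg hyg).2⟩
end

section
/- There exists a universal constant C > 0 such that for every ε ∈ (0, 1/6] and every measurable g : ℝ → ℂ, ∫_ℝ |g(ξ)| dξ ≤ C·ε^{−1/2}·( ∫_ℝ |ξ|^{1−2ε}|g(ξ)|² dξ )^{1/4}·( ∫_ℝ |ξ|^{1+2ε}|g(ξ)|² dξ )^{1/4}. -/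
/-!
For `t > 0` let `w t = t ‖x‖ ^ (d - 2ε) + t⁻¹ ‖x‖ ^ (d + 2ε)`, where `d` is the dimension. By
Cauchy–Schwarz, `(∫ f) ^ 2 ≤ (∫ (w t)⁻¹) * ∫ w t * f ^ 2`. In polar coordinates the radial density
`r ^ (d - 1) / w t` has the antiderivative `(2ε)⁻¹ * arctan (t⁻¹ r ^ (2ε))`, so the integral of
`(w t)⁻¹` is a multiple of `1 / ε` that does not depend on `t`. The other factor is `t A + t⁻¹ B`,
with `A` and `B` the two weighted integrals of `f ^ 2`, and equals `2 √(A B)` at `t = √(B / A)`.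
This is Hardy's proof of Carlson's inequality.
-/

open MeasureTheory
open scoped ENNReal NNReal

section WeightedCauchySchwarz

variable {α : Type*} [MeasurableSpace α] {μ : Measure α} {f u v w : α → ℝ≥0∞}

lemma lintegral_le_lintegral_inv_mul_lintegral_mul_sq (hf : AEMeasurable f μ)
    (hw : AEMeasurable w μ) (hw_zero : ∀ᵐ x ∂μ, w x ≠ 0) (hw_top : ∀ᵐ x ∂μ, w x ≠ ∞) :
    ∫⁻ x, f x ∂μ ≤
      (∫⁻ x, (w x)⁻¹ ∂μ) ^ (1 / 2 : ℝ) * (∫⁻ x, w x * f x ^ 2 ∂μ) ^ (1 / 2 : ℝ) := by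
  have h_split : ∀ᵐ x ∂μ, f x = (w x)⁻¹ ^ (1 / 2 : ℝ) * (w x * f x ^ 2) ^ (1 / 2 : ℝ) := by
    filter_upwards [hw_zero, hw_top] with x hx_zero hx_top
    rw [← ENNReal.mul_rpow_of_nonneg _ _ (by norm_num), ← mul_assoc,
      ENNReal.inv_mul_cancel hx_zero hx_top, one_mul, ← ENNReal.rpow_natCast_mul]
    norm_num
  rw [lintegral_congr_ae h_split]
  exact ENNReal.lintegral_mul_norm_pow_le hw.inv (hw.mul (hf.pow_const 2))
    (by norm_num) (by norm_num) (by norm_num)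

lemma exists_mul_add_inv_mul_eq_two_mul_sqrt {A B : ℝ≥0∞} (hA_zero : A ≠ 0) (hA_top : A ≠ ∞)
    (hB_zero : B ≠ 0) (hB_top : B ≠ ∞) :
    ∃ t : ℝ≥0, t ≠ 0 ∧ t * A + (t : ℝ≥0∞)⁻¹ * B = 2 * (A * B) ^ (1 / 2 : ℝ) := by
  lift A to ℝ≥0 using hA_top
  lift B to ℝ≥0 using hB_top
  obtain ⟨a, rfl⟩ : ∃ a, A = a ^ 2 := ⟨NNReal.sqrt A, (NNReal.sq_sqrt A).symm⟩
  obtain ⟨b, rfl⟩ : ∃ b, B = b ^ 2 := ⟨NNReal.sqrt B, (NNReal.sq_sqrt B).symm⟩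
  have ha : a ≠ 0 := by rintro rfl; simp at hA_zero
  have hb : b ≠ 0 := by rintro rfl; simp at hB_zero
  have h_sqrt : (a ^ 2 * b ^ 2) ^ (1 / 2 : ℝ) = a * b := by
    rw [← mul_pow, ← NNReal.sqrt_eq_rpow, NNReal.sqrt_sq]
  refine ⟨b / a, div_ne_zero hb ha, ?_⟩
  rw [← ENNReal.coe_inv (div_ne_zero hb ha), ← ENNReal.coe_mul (a ^ 2),
    ← ENNReal.coe_rpow_of_nonneg _ (by norm_num), h_sqrt]
  norm_cast
  field_simp
  norm_num

lemma lintegral_le_lintegral_inv_add_mul_add (hf : AEMeasurable f μ) (hu : AEMeasurable u μ)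
    (hv : AEMeasurable v μ) (hu_zero : ∀ᵐ x ∂μ, u x ≠ 0) (hu_top : ∀ᵐ x ∂μ, u x ≠ ∞)
    (hv_top : ∀ᵐ x ∂μ, v x ≠ ∞) {t : ℝ≥0} (ht : t ≠ 0) :
    ∫⁻ x, f x ∂μ ≤ (∫⁻ x, (t * u x + (t : ℝ≥0∞)⁻¹ * v x)⁻¹ ∂μ) ^ (1 / 2 : ℝ) *
      (t * ∫⁻ x, u x * f x ^ 2 ∂μ + (t : ℝ≥0∞)⁻¹ * ∫⁻ x, v x * f x ^ 2 ∂μ) ^ (1 / 2 : ℝ) := by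
  have ht_inv : (t : ℝ≥0∞)⁻¹ ≠ ∞ := by simpa using ht
  have h_weighted : ∫⁻ x, (t * u x + (t : ℝ≥0∞)⁻¹ * v x) * f x ^ 2 ∂μ =
      t * ∫⁻ x, u x * f x ^ 2 ∂μ + (t : ℝ≥0∞)⁻¹ * ∫⁻ x, v x * f x ^ 2 ∂μ := by
    simp only [add_mul, mul_assoc]
    rw [lintegral_add_left' (by fun_prop), lintegral_const_mul' _ _ ENNReal.coe_ne_top,
      lintegral_const_mul' _ _ ht_inv]
  rw [← h_weighted]
  refine lintegral_le_lintegral_inv_mul_lintegral_mul_sq hf (by fun_prop) ?_ ?_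
  · filter_upwards [hu_zero] with x hux
    simp [hux, ht]
  · filter_upwards [hu_top, hv_top] with x hux hvx
    finiteness

lemma lintegral_le_of_lintegral_inv_add_le {K : ℝ≥0∞} (hf : AEMeasurable f μ)
    (hu : AEMeasurable u μ) (hv : AEMeasurable v μ)
    (hu_zero : ∀ᵐ x ∂μ, u x ≠ 0) (hu_top : ∀ᵐ x ∂μ, u x ≠ ∞)
    (hv_zero : ∀ᵐ x ∂μ, v x ≠ 0) (hv_top : ∀ᵐ x ∂μ, v x ≠ ∞) (hK_zero : K ≠ 0)
    (hK : ∀ t : ℝ≥0, t ≠ 0 → ∫⁻ x, (t * u x + (t : ℝ≥0∞)⁻¹ * v x)⁻¹ ∂μ ≤ K) :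
    ∫⁻ x, f x ∂μ ≤ (2 * K) ^ (1 / 2 : ℝ) *
      (∫⁻ x, u x * f x ^ 2 ∂μ) ^ (1 / 4 : ℝ) * (∫⁻ x, v x * f x ^ 2 ∂μ) ^ (1 / 4 : ℝ) := by
  set A := ∫⁻ x, u x * f x ^ 2 ∂μ with hA
  set B := ∫⁻ x, v x * f x ^ 2 ∂μ with hB
  -- `0 * ∞ = 0` on the right-hand side, so here `f` has to vanish almost everywhere.
  rcases eq_or_ne A 0 with hA_zero | hA_zero
  · have h_le := lintegral_le_lintegral_inv_mul_lintegral_mul_sq hf hu hu_zero hu_top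
    rw [← hA, hA_zero, ENNReal.zero_rpow_of_pos (by norm_num), mul_zero] at h_le
    exact h_le.trans zero_le
  rcases eq_or_ne B 0 with hB_zero | hB_zero
  · have h_le := lintegral_le_lintegral_inv_mul_lintegral_mul_sq hf hv hv_zero hv_top
    rw [← hB, hB_zero, ENNReal.zero_rpow_of_pos (by norm_num), mul_zero] at h_le
    exact h_le.trans zero_le
  rcases eq_or_ne A ∞ with hA_top | hA_top
  · simp [hA_top, hB_zero, hK_zero, ENNReal.mul_top, ENNReal.top_mul]
  rcases eq_or_ne B ∞ with hB_top | hB_top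
  · simp [hB_top, hA_zero, hK_zero, ENNReal.mul_top]
  obtain ⟨t, ht, h_opt⟩ :=
    exists_mul_add_inv_mul_eq_two_mul_sqrt hA_zero hA_top hB_zero hB_top
  calc ∫⁻ x, f x ∂μ
      ≤ (∫⁻ x, (t * u x + (t : ℝ≥0∞)⁻¹ * v x)⁻¹ ∂μ) ^ (1 / 2 : ℝ) *
          (t * A + (t : ℝ≥0∞)⁻¹ * B) ^ (1 / 2 : ℝ) :=
        lintegral_le_lintegral_inv_add_mul_add hf hu hv hu_zero hu_top hv_top ht
    _ ≤ K ^ (1 / 2 : ℝ) * (2 * (A * B) ^ (1 / 2 : ℝ)) ^ (1 / 2 : ℝ) := by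
        rw [h_opt]
        gcongr
        exact hK t ht
    _ = (2 * K) ^ (1 / 2 : ℝ) * A ^ (1 / 4 : ℝ) * B ^ (1 / 4 : ℝ) := by
        have h_nonneg : (0 : ℝ) ≤ 1 / 2 := by norm_num
        simp only [ENNReal.mul_rpow_of_nonneg _ _ h_nonneg, ← ENNReal.rpow_mul]
        norm_num
        ring

end WeightedCauchySchwarz

section RadialIntegral

open Module Metric Filter Topology
open scoped Real

variable {a t : ℝ}

lemma hasDerivAt_arctan_rpow {r : ℝ} (ha : a ≠ 0) (ht : 0 < t) (hr : 0 < r) :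
    HasDerivAt (fun r ↦ a⁻¹ * Real.arctan (t⁻¹ * r ^ a))
      (t * r ^ (1 - a) + t⁻¹ * r ^ (1 + a))⁻¹ r := by
  have h_deriv :=
    ((Real.hasDerivAt_rpow_const (p := a) (.inl hr.ne')).const_mul t⁻¹).arctan.const_mul a⁻¹
  refine h_deriv.congr_deriv ?_
  rw [Real.rpow_sub hr, Real.rpow_add hr, Real.rpow_sub hr, Real.rpow_one]
  field_simp

lemma tendsto_arctan_rpow_atTop (ha : 0 < a) (ht : 0 < t) :
    Tendsto (fun r ↦ a⁻¹ * Real.arctan (t⁻¹ * r ^ a)) atTop (𝓝 (π / (2 * a))) := by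
  have h_arctan := (Real.tendsto_arctan_atTop.mono_right nhdsWithin_le_nhds).comp
    ((tendsto_rpow_atTop ha).const_mul_atTop (inv_pos.2 ht))
  rw [show π / (2 * a) = a⁻¹ * (π / 2) by field_simp]
  exact h_arctan.const_mul a⁻¹

lemma continuous_arctan_rpow (ha : 0 ≤ a) :
    Continuous fun r : ℝ ↦ a⁻¹ * Real.arctan (t⁻¹ * r ^ a) := by
  have := Real.continuous_rpow_const ha
  fun_prop

lemma integrableOn_Ioi_inv_rpow_add_rpow (ha : 0 < a) (ht : 0 < t) :
    IntegrableOn (fun r : ℝ ↦ (t * r ^ (1 - a) + t⁻¹ * r ^ (1 + a))⁻¹) (Set.Ioi 0) :=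
  integrableOn_Ioi_deriv_of_nonneg (continuous_arctan_rpow ha.le).continuousWithinAt
    (fun _ hr ↦ hasDerivAt_arctan_rpow ha.ne' ht hr)
    (fun r (hr : 0 < r) ↦ by positivity) (tendsto_arctan_rpow_atTop ha ht)

lemma integral_Ioi_inv_rpow_add_rpow (ha : 0 < a) (ht : 0 < t) :
    ∫ r in Set.Ioi (0 : ℝ), (t * r ^ (1 - a) + t⁻¹ * r ^ (1 + a))⁻¹ = π / (2 * a) := by
  rw [integral_Ioi_of_hasDerivAt_of_nonneg (continuous_arctan_rpow ha.le).continuousWithinAt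
    (fun _ hr ↦ hasDerivAt_arctan_rpow ha.ne' ht hr)
    (fun r (hr : 0 < r) ↦ by positivity) (tendsto_arctan_rpow_atTop ha ht)]
  simp [Real.zero_rpow ha.ne']

variable {E : Type*} [NormedAddCommGroup E] [NormedSpace ℝ E] [FiniteDimensional ℝ E]
  [Nontrivial E]

variable (E) in
lemma eqOn_pow_finrank_sub_one_smul_inv_rpow_add_rpow :
    Set.EqOn
      (fun r ↦ r ^ (finrank ℝ E - 1) •
        (t * r ^ (finrank ℝ E - a) + t⁻¹ * r ^ (finrank ℝ E + a))⁻¹)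
      (fun r ↦ (t * r ^ (1 - a) + t⁻¹ * r ^ (1 + a))⁻¹) (Set.Ioi 0) := by
  intro r (hr : 0 < r)
  have h_dim : (finrank ℝ E : ℝ) = (finrank ℝ E - 1 : ℕ) + 1 := by
    exact_mod_cast (Nat.sub_add_cancel finrank_pos).symm
  simp only [smul_eq_mul]
  rw [h_dim, add_sub_assoc, add_assoc, Real.rpow_add hr, Real.rpow_add hr, Real.rpow_natCast,
    mul_left_comm t, mul_left_comm t⁻¹, ← mul_add, mul_inv,
    mul_inv_cancel_left₀ (pow_pos hr _).ne']

variable [MeasurableSpace E] [BorelSpace E] (μ : Measure E) [μ.IsAddHaarMeasure]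

lemma integrable_inv_norm_rpow_add_norm_rpow (ha : 0 < a) (ht : 0 < t) :
    Integrable
      (fun x : E ↦ (t * ‖x‖ ^ (finrank ℝ E - a) + t⁻¹ * ‖x‖ ^ (finrank ℝ E + a))⁻¹) μ := by
  rw [integrable_fun_norm_addHaar μ
      (f := fun r ↦ (t * r ^ (finrank ℝ E - a) + t⁻¹ * r ^ (finrank ℝ E + a))⁻¹),
    integrableOn_congr_fun (eqOn_pow_finrank_sub_one_smul_inv_rpow_add_rpow E) measurableSet_Ioi]
  exact integrableOn_Ioi_inv_rpow_add_rpow ha ht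

lemma integral_inv_norm_rpow_add_norm_rpow (ha : 0 < a) (ht : 0 < t) :
    ∫ x, (t * ‖x‖ ^ (finrank ℝ E - a) + t⁻¹ * ‖x‖ ^ (finrank ℝ E + a))⁻¹ ∂μ =
      finrank ℝ E * μ.real (ball 0 1) * π / (2 * a) := by
  rw [integral_fun_norm_addHaar μ
      (fun r ↦ (t * r ^ (finrank ℝ E - a) + t⁻¹ * r ^ (finrank ℝ E + a))⁻¹),
    setIntegral_congr_fun measurableSet_Ioi (eqOn_pow_finrank_sub_one_smul_inv_rpow_add_rpow E),
    integral_Ioi_inv_rpow_add_rpow ha ht]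
  simp only [nsmul_eq_mul, smul_eq_mul, mul_div_assoc, mul_assoc]

lemma lintegral_inv_norm_rpow_add_norm_rpow (ha : 0 < a) {t : ℝ≥0} (ht : t ≠ 0) :
    ∫⁻ x, (t * ENNReal.ofReal (‖x‖ ^ (finrank ℝ E - a)) +
        (t : ℝ≥0∞)⁻¹ * ENNReal.ofReal (‖x‖ ^ (finrank ℝ E + a)))⁻¹ ∂μ =
      ENNReal.ofReal (finrank ℝ E * μ.real (ball 0 1) * π / (2 * a)) := by
  have ht_pos : 0 < (t : ℝ) := by positivity
  rw [← integral_inv_norm_rpow_add_norm_rpow μ ha ht_pos, ofReal_integral_eq_lintegral_ofReal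
    (integrable_inv_norm_rpow_add_norm_rpow μ ha ht_pos) (.of_forall fun x ↦ by positivity)]
  refine lintegral_congr_ae ?_
  filter_upwards [Measure.ae_ne μ 0] with x hx
  have : 0 < ‖x‖ := norm_pos_iff.2 hx
  rw [ENNReal.ofReal_inv_of_pos (by positivity), ENNReal.ofReal_add (by positivity) (by positivity),
    ENNReal.ofReal_mul (by positivity), ENNReal.ofReal_mul (by positivity),
    ENNReal.ofReal_inv_of_pos ht_pos, ENNReal.ofReal_coe_nnreal]

lemma ae_ofReal_norm_rpow_ne_zero (s : ℝ) : ∀ᵐ x ∂μ, ENNReal.ofReal (‖x‖ ^ s) ≠ 0 := by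
  filter_upwards [Measure.ae_ne μ 0] with x hx
  have : 0 < ‖x‖ := norm_pos_iff.2 hx
  positivity

theorem stmt_14_general {ε : ℝ} (hε : 0 < ε) {f : E → ℝ≥0∞} (hf : AEMeasurable f μ) :
    ∫⁻ x, f x ∂μ ≤
      ENNReal.ofReal √(finrank ℝ E * μ.real (ball 0 1) * π / (2 * ε)) *
        (∫⁻ x, ENNReal.ofReal (‖x‖ ^ (finrank ℝ E - 2 * ε)) * f x ^ 2 ∂μ) ^ (1 / 4 : ℝ) *
        (∫⁻ x, ENNReal.ofReal (‖x‖ ^ (finrank ℝ E + 2 * ε)) * f x ^ 2 ∂μ) ^ (1 / 4 : ℝ) := by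
  have h_sphere : 0 < finrank ℝ E * μ.real (ball 0 1) :=
    mul_pos (by exact_mod_cast finrank_pos)
      (ENNReal.toReal_pos (measure_ball_pos μ 0 one_pos).ne' measure_ball_lt_top.ne)
  set K : ℝ := finrank ℝ E * μ.real (ball 0 1) * π / (2 * (2 * ε)) with hK
  have hK_pos : 0 < K := by positivity
  have h_const : ENNReal.ofReal √(finrank ℝ E * μ.real (ball 0 1) * π / (2 * ε)) =
      (2 * ENNReal.ofReal K) ^ (1 / 2 : ℝ) := by
    rw [← ENNReal.ofReal_ofNat, ← ENNReal.ofReal_mul zero_le_two,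
      ENNReal.ofReal_rpow_of_nonneg (by positivity) (by norm_num), ← Real.sqrt_eq_rpow, hK,
      mul_div_assoc', mul_div_mul_left _ _ two_ne_zero]
  rw [h_const]
  exact lintegral_le_of_lintegral_inv_add_le hf (by fun_prop) (by fun_prop)
    (ae_ofReal_norm_rpow_ne_zero μ _) (.of_forall fun _ ↦ ENNReal.ofReal_ne_top)
    (ae_ofReal_norm_rpow_ne_zero μ _) (.of_forall fun _ ↦ ENNReal.ofReal_ne_top)
    (ENNReal.ofReal_pos.2 hK_pos).ne'
    fun _ ht ↦ (lintegral_inv_norm_rpow_add_norm_rpow μ (by positivity) ht).le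

end RadialIntegral

/-- Quantitative ε-dependent Fourier-side L¹–L² interpolation:
`∫|g| ≤ C ε^{-1/2} (∫ |ξ|^{1-2ε}|g|²)^{1/4} (∫ |ξ|^{1+2ε}|g|²)^{1/4}`
with `C` independent of `ε ∈ (0, 1/6]`. -/
theorem stmt_14 :
    ∃ C : ℝ, 0 < C ∧ ∀ ε : ℝ, 0 < ε → ε ≤ 1 / 6 → ∀ g : ℝ → ℂ, Measurable g →
      (∫⁻ ξ : ℝ, (‖g ξ‖₊ : ℝ≥0∞)) ≤
        ENNReal.ofReal (C * ε ^ (-(1 : ℝ) / 2))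
          * (∫⁻ ξ : ℝ, ENNReal.ofReal (|ξ| ^ (1 - 2 * ε)) * (‖g ξ‖₊ : ℝ≥0∞) ^ 2)
              ^ ((1 : ℝ) / 4)
          * (∫⁻ ξ : ℝ, ENNReal.ofReal (|ξ| ^ (1 + 2 * ε)) * (‖g ξ‖₊ : ℝ≥0∞) ^ 2)
              ^ ((1 : ℝ) / 4) := by
  refine ⟨√Real.pi, by positivity, fun ε hε _ g hg ↦ ?_⟩
  have h_const : √(2 * Real.pi / (2 * ε)) = √Real.pi * ε ^ (-(1 : ℝ) / 2) := by
    rw [mul_div_mul_left _ _ two_ne_zero, Real.sqrt_div Real.pi_pos.le, neg_div,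
      Real.rpow_neg hε.le, ← Real.sqrt_eq_rpow, div_eq_mul_inv]
  simpa [h_const] using stmt_14_general volume hε hg.nnnorm.coe_nnreal_ennreal.aemeasurable
end
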